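/- arXiv:1309.2065 — 3 statements merged into one kernel-verified Lean document; each statement's English description precedes it below -/
import Mathlib

section
/- Let m ≥ 1, let u₀ ∈ ℤ_2^* be a unit, and let B₁ ∈ S_{m-1}(ℤ_2)^× be nondegenerate. Then α_2((u₀) ⊥ 5B₁) = α_2((u₀) ⊥ B₁). -/
/-!
Write `M[x] = xᵀ M x`. For a symmetric `A`, a vector `w` with `A[w]` a unit and `c ∈ ℤ_2`, let
`A_w` be `A` with its orthogonal summand `ℤ_2 w` rescaled by `c`, i.e. the quadratic form
`A[x] + (c - 1) (xᵀAw)² / A[w]` (`LD.twist`). Since `u₀ ⊥ 5B₁ = 5 (5⁻¹u₀ ⊥ B₁)` and scaling by a unit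
does not change the congruences that define the density, it is enough to compare `A = u₀ ⊥ B₁` with
`A' = 5⁻¹u₀ ⊥ B₁`, which is the twist of `A` along the first basis vector with `c = 5⁻¹ ≡ 5 mod 8`.

The key fact (`LD.twist_iso`) is that for `c ≡ 5 mod 8` the `ℤ_2`-class of `A_w` does not depend on
`w`. It reduces to two explicit isometries, for `w = e + z` with `z ⊥ e` of even norm
(`LD.iso_even`) and for two orthogonal vectors of unit norm (`LD.iso_perp`); each needs only the
solution of one quadratic equation by Hensel's lemma.

Now fix `a` with `2 ^ a` dividing neither determinant and count the pairs `(w, X)` modulo `2 ^ a`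
with `A[w]` a unit and `A'[X] ≡ A_w` (`LD.pairs`). By the key fact the fibre over each `w` is a coset
of the stabilizer of `A'`, so the number of pairs is `#{w} · #A_a(A', A')` (`LD.ncard_pairs`). On the
other hand `(w, X) ↦ (Xw, X⁻¹)` identifies these pairs with the analogous ones for `(A', A, c⁻¹)`
(`LD.ncard_pairs_le`, applied in both directions). The admissible `w` are the same for `A` and `A'`,
as these agree modulo `2`; hence `#A_a(A, A) = #A_a(A', A')` for all large `a`.

The congruence modulo `2 ^ a S_e` is handled as congruence modulo `2 ^ (a + 1)` of the values of the
quadratic forms (`LD.even_form_iff`).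
-/

open Matrix Filter

open scoped Classical

noncomputable section

namespace KM

variable (p : ℕ) [Fact p.Prime]

/-- Entrywise coercion of a `ℤ_[p]`-matrix into `ℚ_[p]`. -/
def q {n m : Type*} (A : Matrix n m ℤ_[p]) : Matrix n m ℚ_[p] :=
  A.map (fun x : ℤ_[p] => (x : ℚ_[p]))

/-- `ℤ_p`-equivalence of symmetric matrices with entries in `ℤ_p`. -/
def IntEquiv {n : Type*} [Fintype n] [DecidableEq n]
    (A B : Matrix n n ℤ_[p]) : Prop :=
  ∃ U : Matrix n n ℤ_[p], IsUnit U.det ∧ B = Uᵀ * A * U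

/-- `ℤ_p`-equivalence of `ℤ_p`-matrices up to reindexing (for index types of
the same cardinality). -/
def IntEquivR {n n' : Type*} [Fintype n] [DecidableEq n] [Fintype n'] [DecidableEq n']
    (A : Matrix n n ℤ_[p]) (B : Matrix n' n' ℤ_[p]) : Prop :=
  ∃ e : n ≃ n', IntEquiv p A (B.submatrix e e)

/-- `ℤ_p`-equivalence of symmetric matrices with entries in `ℚ_p`. -/
def RatEquiv {n : Type*} [Fintype n] [DecidableEq n]
    (A B : Matrix n n ℚ_[p]) : Prop :=
  ∃ U : Matrix n n ℤ_[p], IsUnit U.det ∧ B = (q p U)ᵀ * A * (q p U)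

/-- `ℤ_p`-equivalence of `ℚ_p`-matrices up to reindexing. -/
def RatEquivR {n n' : Type*} [Fintype n] [DecidableEq n] [Fintype n'] [DecidableEq n']
    (A : Matrix n n ℚ_[p]) (B : Matrix n' n' ℚ_[p]) : Prop :=
  ∃ e : n ≃ n', RatEquiv p A (B.submatrix e e)

/-- A matrix over `ℚ_p` is half-integral: symmetric, diagonal entries in `ℤ_p`,
off-diagonal entries in `(1/2)ℤ_p`. -/
def IsHalfIntegral {n : Type*} [DecidableEq n] (A : Matrix n n ℚ_[p]) : Prop :=
  A.IsSymm ∧ ∀ i j, ∃ x : ℤ_[p], A i j = (if i = j then 1 else 2⁻¹) * (x : ℚ_[p])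

/-- `A ∈ 4·L_{m,p}`. -/
def InFourL {n : Type*} [DecidableEq n] (A : Matrix n n ℚ_[p]) : Prop :=
  IsHalfIntegral p ((4 : ℚ_[p])⁻¹ • A)

/-- The rank-one matrix `rᵀ r` viewed over `ℚ_p`. -/
def outer {n : Type*} (r : n → ℤ_[p]) : Matrix n n ℚ_[p] :=
  Matrix.of fun i j => ((r i : ℚ_[p]) * (r j : ℚ_[p]))

/-- The matrix `A^{(1)} = [[1, r/2], [rᵀ/2, (A + rᵀr)/4]]`. -/
def Aone {n : Type*} [Fintype n] [DecidableEq n]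
    (A : Matrix n n ℚ_[p]) (r : n → ℤ_[p]) :
    Matrix (Fin 1 ⊕ n) (Fin 1 ⊕ n) ℚ_[p] :=
  Matrix.fromBlocks 1 (Matrix.of fun _ j => (r j : ℚ_[p]) / 2)
    (Matrix.of fun i _ => (r i : ℚ_[p]) / 2)
    ((4 : ℚ_[p])⁻¹ • (A + outer p r))

/-- A `ℚ_p`-matrix has all entries in `ℤ_p`. -/
def IsIntegral {n m : Type*} (A : Matrix n m ℚ_[p]) : Prop :=
  ∀ i j, ∃ x : ℤ_[p], A i j = (x : ℚ_[p])

/-- Membership in `L^{(0)}`: nondegenerate, symmetric, integral, even diagonal. -/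
def InL0 {n : Type*} [Fintype n] [DecidableEq n] (A : Matrix n n ℚ_[p]) : Prop :=
  A.IsSymm ∧ A.det ≠ 0 ∧ ∀ i j, ∃ x : ℤ_[p], A i j = (if i = j then 2 else 1) * (x : ℚ_[p])

/-- Membership in `L'_{m,p}`. -/
def InLprime {n : Type*} [Fintype n] [DecidableEq n] (A : Matrix n n ℚ_[p]) : Prop :=
  IsHalfIntegral p A ∧ ∃ r : n → ℤ_[p], InFourL p (A + outer p r)

/-- Membership in `L^{(1)}`: nondegenerate element of `L'`. -/
def InL1 {n : Type*} [Fintype n] [DecidableEq n] (A : Matrix n n ℚ_[p]) : Prop :=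
  InLprime p A ∧ A.det ≠ 0

/-- `B[W⁻¹] = (W⁻¹)ᵀ B W⁻¹`. -/
def conjInv {n : Type*} [Fintype n] [DecidableEq n]
    (B : Matrix n n ℚ_[p]) (W : Matrix n n ℤ_[p]) : Matrix n n ℚ_[p] :=
  ((q p W)⁻¹)ᵀ * B * (q p W)⁻¹

/-- `Ω̃(C)` for `C` an integral symmetric matrix. -/
def OmS {n : Type*} [Fintype n] [DecidableEq n] (C : Matrix n n ℤ_[p]) :
    Set (Matrix n n ℤ_[p]) :=
  {W | W.det ≠ 0 ∧ (conjInv p (q p C) W).IsSymm ∧ IsIntegral p (conjInv p (q p C) W)}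

/-- `Ω̃^{(0)}(B)`. -/
def OmT0 {n : Type*} [Fintype n] [DecidableEq n] (B : Matrix n n ℚ_[p]) :
    Set (Matrix n n ℤ_[p]) :=
  {W | W.det ≠ 0 ∧ InL0 p (conjInv p B W)}

/-- `Ω̃^{(1)}(B)`. -/
def OmT1 {n : Type*} [Fintype n] [DecidableEq n] (B : Matrix n n ℚ_[p]) :
    Set (Matrix n n ℤ_[p]) :=
  {W | W.det ≠ 0 ∧ InL1 p (conjInv p B W)}

/-- `Ω̃^{(j)}(B)` for `j ∈ {0,1}`. -/
def OmTJ {n : Type*} [Fintype n] [DecidableEq n] (j : ℕ) (B : Matrix n n ℚ_[p]) :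
    Set (Matrix n n ℤ_[p]) :=
  {W | W.det ≠ 0 ∧ if j = 0 then InL0 p (conjInv p B W) else InL1 p (conjInv p B W)}

/-- The double coset `D_{m,i} = GL·diag(1_{m-i}, p·1_i)·GL`. -/
def Dset {n : Type*} [Fintype n] [DecidableEq n] (i : ℕ) : Set (Matrix n n ℤ_[p]) :=
  {W | ∃ s : Finset n, s.card = i ∧
    ∃ U V : Matrix n n ℤ_[p], IsUnit U.det ∧ IsUnit V.det ∧
      W = U * Matrix.diagonal (fun j => if j ∈ s then (p : ℤ_[p]) else 1) * V}

/-- `W` and `W'` lie in the same left `GL_m(ℤ_p)`-coset. -/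
def SameLeft {n : Type*} [Fintype n] [DecidableEq n] (W W' : Matrix n n ℤ_[p]) : Prop :=
  ∃ U : Matrix n n ℤ_[p], IsUnit U.det ∧ W' = U * W

/-- `W` and `W'` lie in the same right `GL_m(ℤ_p)`-coset. -/
def SameRight {n : Type*} [Fintype n] [DecidableEq n] (W W' : Matrix n n ℤ_[p]) : Prop :=
  ∃ U : Matrix n n ℤ_[p], IsUnit U.det ∧ W' = W * U

/-- `φ` induces a bijection between the sets of left `GL(ℤ_p)`-cosets of `Ω` and `Ω'`. -/
def InducesLeftBij {n n' : Type*} [Fintype n] [DecidableEq n] [Fintype n'] [DecidableEq n']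
    (φ : Matrix n n ℤ_[p] → Matrix n' n' ℤ_[p])
    (Ω : Set (Matrix n n ℤ_[p])) (Ω' : Set (Matrix n' n' ℤ_[p])) : Prop :=
  (∀ W ∈ Ω, φ W ∈ Ω') ∧
  (∀ W₁ ∈ Ω, ∀ W₂ ∈ Ω, (SameLeft p W₁ W₂ ↔ SameLeft p (φ W₁) (φ W₂))) ∧
  (∀ V ∈ Ω', ∃ W ∈ Ω, SameLeft p (φ W) V)

/-- `A[Y] ≡ B mod p^a S_e`. -/
def densCond {n n' : Type*} [Fintype n] [Fintype n'] [DecidableEq n']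
    (A : Matrix n n ℤ_[p]) (B : Matrix n' n' ℤ_[p]) (a : ℕ)
    (Y : Matrix n n' ℤ_[p]) : Prop :=
  ∀ i j, ((p : ℤ_[p]) ^ a * (if i = j then 2 else 1)) ∣ (Yᵀ * A * Y - B) i j

/-- `#A_a(A,B)`: the number of solutions mod `p^a`. -/
def Acount {n n' : Type*} [Fintype n] [Fintype n'] [DecidableEq n']
    (A : Matrix n n ℤ_[p]) (B : Matrix n' n' ℤ_[p]) (a : ℕ) : ℕ :=
  Nat.card {X : Matrix n n' (ZMod (p ^ a)) //
    ∃ Y : Matrix n n' ℤ_[p], Y.map (PadicInt.toZModPow a) = X ∧ densCond p A B a Y}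

/-- The local density `α_p(A,B)`. -/
def locDensPair {n n' : Type*} [Fintype n] [Fintype n'] [DecidableEq n']
    (A : Matrix n n ℤ_[p]) (B : Matrix n' n' ℤ_[p]) : ℝ :=
  limUnder atTop (fun a : ℕ =>
    (2 : ℝ) ^ (-(if Fintype.card n = Fintype.card n' then (1 : ℤ) else 0)) *
    (p : ℝ) ^ ((a : ℤ) * (-((Fintype.card n : ℤ) * (Fintype.card n' : ℤ)) +
      ((Fintype.card n' : ℤ) * ((Fintype.card n' : ℤ) + 1)) / 2)) *
    (Acount p A B a : ℝ))

/-- The local density `α_p(A) = α_p(A,A)`. -/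
def locDens {n : Type*} [Fintype n] [DecidableEq n] (A : Matrix n n ℤ_[p]) : ℝ :=
  locDensPair p A A

/-- `χ_p` on units, for `p` odd. -/
def chiOdd (u : ℤ_[p]) : ℤ :=
  if IsSquare (u : ℚ_[p]) then 1 else if IsUnit u then -1 else 0

/-- `χ_2` on units. -/
def chi2 (u : ℤ_[2]) : ℤ :=
  if IsSquare (u : ℚ_[2]) then 1
  else if IsSquare (((5 * u : ℤ_[2]) : ℚ_[2])) then -1 else 0

/-- The set of `GL(ℤ_p)`-equivalence classes of elements of `S`. -/
def classesOf {n : Type*} [Fintype n] [DecidableEq n]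
    (S : Set (Matrix n n ℤ_[p])) : Set (Set (Matrix n n ℤ_[p])) :=
  (fun A => {A' | IntEquiv p A A'}) '' S

end KM

namespace LD

/-! ### Bilinear forms and twists -/

variable {n : Type*} [Fintype n]

/-- The bilinear form `(x, y) ↦ xᵀ A y` attached to a matrix. -/
def bil (A : Matrix n n ℤ_[2]) (x y : n → ℤ_[2]) : ℤ_[2] := x ⬝ᵥ A *ᵥ y

/-- `twist c A w` is the quadratic form obtained from `x ↦ xᵀ A x` by rescaling the orthogonal
summand spanned by `w` by `c`. It is meaningful when `wᵀ A w` is a unit; otherwise `Ring.inverse` is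
`0` and the twist is trivial. -/
def twist (c : ℤ_[2]) (A : Matrix n n ℤ_[2]) (w x : n → ℤ_[2]) : ℤ_[2] :=
  bil A x x + (c - 1) * bil A x w ^ 2 * Ring.inverse (bil A w w)

section
variable (A : Matrix n n ℤ_[2]) (x y z : n → ℤ_[2]) (r : ℤ_[2])

lemma bil_add_left : bil A (x + y) z = bil A x z + bil A y z := by
  simp [bil, add_dotProduct]

lemma bil_add_right : bil A x (y + z) = bil A x y + bil A x z := by
  simp [bil, mulVec_add, dotProduct_add]

lemma bil_smul_left : bil A (r • x) y = r * bil A x y := by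
  simp [bil]

lemma bil_smul_right : bil A x (r • y) = r * bil A x y := by
  simp [bil, mulVec_smul]

lemma bil_sub_left : bil A (x - y) z = bil A x z - bil A y z := by
  simp [bil, sub_dotProduct]

lemma bil_sub_right : bil A x (y - z) = bil A x y - bil A x z := by
  simp [bil, mulVec_sub, dotProduct_sub]

variable {A} in
lemma bil_comm (hA : A.IsSymm) : bil A x y = bil A y x := by
  unfold bil
  rw [dotProduct_comm, dotProduct_mulVec, ← mulVec_transpose, hA.eq, dotProduct_comm]
end

/-! ### Independence of the twist from the vector -/

lemma hensel_quad (a v : ℤ_[2]) : ∃ g : ℤ_[2], a * g ^ 2 + g = 2 * v := by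
  let F : Polynomial ℤ_[2] := Polynomial.C a * Polynomial.X ^ 2 + Polynomial.X - Polynomial.C (2 * v)
  have h := hensels_lemma (p := 2) (F := F) (a := 0) (by
    have h2 := (PadicInt.norm_lt_one_iff_dvd (2 * v)).2 (by push_cast; exact dvd_mul_right _ _)
    simpa [F] using h2)
  obtain ⟨g, hg, -⟩ := h
  refine ⟨g, ?_⟩
  have : a * g ^ 2 + g - 2 * v = 0 := by simpa [F] using hg
  linear_combination this

lemma isUnit_iff_not_dvd (x : ℤ_[2]) : IsUnit x ↔ ¬ (2 : ℤ_[2]) ∣ x := by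
  have := PadicInt.norm_lt_one_iff_dvd x
  rw [← PadicInt.not_isUnit_iff] at this
  rw [← not_iff_not, this]
  simp

lemma exists_odd {x : ℤ_[2]} (hx : IsUnit x) : ∃ v, x = 1 + 2 * v := by
  have key : PadicInt.toZMod (x - 1) = 0 := by
    have h := hx.map (PadicInt.toZMod (p := 2))
    rw [map_sub, map_one]
    revert h
    generalize PadicInt.toZMod x = y
    revert y
    decide
  rw [← RingHom.mem_ker, PadicInt.ker_toZMod, PadicInt.maximalIdeal_eq_span_p,
    Ideal.mem_span_singleton] at key
  obtain ⟨v, hv⟩ := key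
  exact ⟨v, by push_cast at hv; linear_combination hv⟩

/-- Isometries are sought among the maps that differ from the identity by an `A`-linear correction
in the plane spanned by `e` and `z`. -/
lemma exists_perturb [DecidableEq n] (A : Matrix n n ℤ_[2]) (e z : n → ℤ_[2])
    (a₁ a₂ a₃ a₄ : ℤ_[2]) : ∃ S : Matrix n n ℤ_[2], ∀ x, S *ᵥ x =
      x + (a₁ * bil A x e + a₂ * bil A x z) • e + (a₃ * bil A x e + a₄ * bil A x z) • z := by
  refine ⟨1 + vecMulVec e (a₁ • A *ᵥ e + a₂ • A *ᵥ z) + vecMulVec z (a₃ • A *ᵥ e + a₄ • A *ᵥ z),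
    fun x => ?_⟩
  simp only [add_mulVec, one_mulVec, vecMulVec_mulVec, op_smul_eq_smul,
    dotProduct_add, dotProduct_smul, dotProduct_comm _ x, smul_eq_mul, bil]

/-- With `u = A[e]`, `s = A[z]` and `X² = 1 + s (c - 1) / (c u)`, the map sends `e + z` to `X e + z`
(both of twisted norm `c (u + s)`), the orthogonal vector `s e - u z` to `c⁻¹ s e - u X z`, and fixes
the complement of the plane. It is integral because `X = 1 + s g` with `g` integral. -/
lemma iso_even [DecidableEq n] {A : Matrix n n ℤ_[2]} (hA : A.IsSymm) {c : ℤ_[2]}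
    (hc : (8 : ℤ_[2]) ∣ c - 5) {e z : n → ℤ_[2]} (hez : bil A e z = 0)
    (he : IsUnit (bil A e e)) (hz : (2 : ℤ_[2]) ∣ bil A z z) (hcu : IsUnit c)
    (hez' : IsUnit (bil A (e + z) (e + z))) :
    ∃ S : Matrix n n ℤ_[2], ∀ x, twist c A (e + z) x = twist c A e (S *ᵥ x) := by
  have hze : bil A z e = 0 := by rw [bil_comm _ _ hA, hez]
  have hsum : bil A (e + z) (e + z) = bil A e e + bil A z z := by
    simp only [bil_add_left, bil_add_right, hez, hze]; ring
  obtain ⟨s', hs'⟩ := hz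
  obtain ⟨c', hc'⟩ := hc
  rw [hsum] at hez'
  have h1 := Ring.mul_inverse_cancel _ he
  have h2 := Ring.mul_inverse_cancel _ hez'
  have h3 := Ring.mul_inverse_cancel _ hcu
  simp only [twist, hsum]
  generalize hu : bil A e e = u at *
  generalize hs : bil A z z = s at *
  generalize Ring.inverse u = iu at *
  generalize Ring.inverse (u + s) = iv at *
  generalize Ring.inverse c = ic at *
  obtain ⟨g, hg⟩ := hensel_quad s' ((1 + 2 * c') * ic * iu)
  have hg' : s * g ^ 2 + 2 * g = (c - 1) * ic * iu := by
    subst hs'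
    linear_combination 2 * hg - ic * iu * hc'
  obtain ⟨S, hS⟩ := exists_perturb A e z
    (iu * s * (u * g + ic - 1) * iv) ((1 + s * g - ic) * iv) (- s * g * iv) (u * g * iv)
  refine ⟨S, fun x => ?_⟩
  rw [hS]
  simp only [bil_add_left, bil_add_right, bil_smul_left, bil_smul_right, hez, hze, hu, hs,
    bil_comm e x hA, bil_comm z x hA]
  generalize bil A x x = qx
  generalize bil A x e = p
  generalize bil A x z = t
  clear hS hu hs hez hze hsum hs' hg
  grind

/-- With `u = A[e]`, `s = A[z]` and `X² = c - 4 c s / u`, which is `1` modulo `8`, the map is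
`e ↦ X e + 2 z`, `z ↦ -(2 s / u) e + c⁻¹ X z` on the plane and the identity on its complement. -/
lemma iso_perp [DecidableEq n] {A : Matrix n n ℤ_[2]} (hA : A.IsSymm) {c : ℤ_[2]}
    (hc : (8 : ℤ_[2]) ∣ c - 5) {e z : n → ℤ_[2]} (hez : bil A e z = 0)
    (he : IsUnit (bil A e e)) (hz : IsUnit (bil A z z)) (hcu : IsUnit c) :
    ∃ S : Matrix n n ℤ_[2], ∀ x, twist c A e x = twist c A z (S *ᵥ x) := by
  have hze : bil A z e = 0 := by rw [bil_comm _ _ hA, hez]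
  obtain ⟨c', hc'⟩ := hc
  have h1 := Ring.mul_inverse_cancel _ he
  have h2 := Ring.mul_inverse_cancel _ hz
  have h3 := Ring.mul_inverse_cancel _ hcu
  have hodd : ∃ v, c * bil A z z * Ring.inverse (bil A e e) = 1 + 2 * v := by
    exact exists_odd ((hcu.mul hz).mul (IsUnit.of_mul_eq_one _ (Ring.inverse_mul_cancel _ he)))
  simp only [twist]
  generalize hu : bil A e e = u at *
  generalize hs : bil A z z = s at *
  generalize Ring.inverse u = iu at *
  generalize Ring.inverse s = is at *
  generalize Ring.inverse c = ic at *
  obtain ⟨v, hv⟩ := hodd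
  obtain ⟨g, hg⟩ := hensel_quad 1 (c' - v)
  have hX : (1 + 2 * g) ^ 2 = c - 4 * c * s * iu := by
    linear_combination 4 * hg - hc' + 4 * hv
  generalize 1 + 2 * g = X at *
  obtain ⟨S, hS⟩ := exists_perturb A e z
    (iu * (X - 1)) (- 2 * iu) (2 * iu) (is * (X * ic - 1))
  refine ⟨S, fun x => ?_⟩
  rw [hS]
  simp only [bil_add_left, bil_add_right, bil_smul_left, bil_smul_right, hez, hze, hu, hs,
    bil_comm e x hA, bil_comm z x hA]
  generalize bil A x x = qx
  generalize bil A x e = p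
  generalize bil A x z = t
  clear hS hu hs hez hze hv hg
  grind

lemma twist_smul (c : ℤ_[2]) (A : Matrix n n ℤ_[2]) {r : ℤ_[2]} (hr : IsUnit r)
    (w x : n → ℤ_[2]) : twist c A (r • w) x = twist c A w x := by
  have h := Ring.mul_inverse_cancel _ hr
  simp only [twist, bil_smul_left, bil_smul_right, Ring.mul_inverse_rev]
  generalize Ring.inverse r = ir at *
  linear_combination ((r * ir + 1) * (c - 1) * bil A x w ^ 2 * Ring.inverse (bil A w w)) * h

/-- For `c ≡ 5 mod 8`, twists of `A` along any two vectors of unit norm are related by an integral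
change of variables. -/
lemma twist_iso [DecidableEq n] {A : Matrix n n ℤ_[2]} (hA : A.IsSymm) {c : ℤ_[2]}
    (hc : (8 : ℤ_[2]) ∣ c - 5) (hcu : IsUnit c) {e w : n → ℤ_[2]}
    (he : IsUnit (bil A e e)) (hw : IsUnit (bil A w w)) :
    ∃ S : Matrix n n ℤ_[2], ∀ x, twist c A w x = twist c A e (S *ᵥ x) := by
  have h1 := Ring.mul_inverse_cancel _ he
  obtain ⟨α, hα⟩ : ∃ α, α = bil A w e * Ring.inverse (bil A e e) := ⟨_, rfl⟩
  obtain ⟨y, hy⟩ : ∃ y, y = w - α • e := ⟨_, rfl⟩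
  have hwy : w = α • e + y := by rw [hy]; abel
  have hye : bil A y e = 0 := by
    rw [hy, bil_sub_left, bil_smul_left, hα]
    linear_combination (- bil A w e) * h1
  have hey : bil A e y = 0 := by rw [bil_comm _ _ hA, hye]
  have hQ : bil A w w = α ^ 2 * bil A e e + bil A y y := by
    rw [hwy]
    simp only [bil_add_left, bil_add_right, bil_smul_left, bil_smul_right, hey, hye]
    ring
  -- If `α` is a unit, `w` is proportional to `e + z` with `z ⊥ e` of even norm; otherwise `y` has
  -- unit norm and the comparison goes through `y`, since `w = y + α • e`.
  by_cases hu : IsUnit α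
  · have h2 := Ring.mul_inverse_cancel _ hu
    have hw' : w = α • (e + Ring.inverse α • y) := by
      rw [smul_add, smul_smul, h2, one_smul, hwy]
    have hunit : IsUnit (bil A (e + Ring.inverse α • y) (e + Ring.inverse α • y)) := by
      rw [hw', bil_smul_left, bil_smul_right] at hw
      exact isUnit_of_mul_isUnit_right (isUnit_of_mul_isUnit_right hw)
    have hev : (2 : ℤ_[2]) ∣ bil A (Ring.inverse α • y) (Ring.inverse α • y) := by
      obtain ⟨a, ha⟩ := exists_odd hunit
      obtain ⟨b, hb⟩ := exists_odd he
      refine ⟨a - b, ?_⟩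
      simp only [bil_add_left, bil_add_right, bil_smul_left, bil_smul_right, hey, hye] at ha ⊢
      linear_combination ha - hb
    obtain ⟨S, hS⟩ := iso_even hA hc (by rw [bil_smul_right, hey, mul_zero]) he hev hcu hunit
    refine ⟨S, fun x => ?_⟩
    rw [← hS, hw', twist_smul c A hu]
  · have hα2 : (2 : ℤ_[2]) ∣ α := by
      by_contra h
      exact hu ((isUnit_iff_not_dvd α).2 h)
    have hyu : IsUnit (bil A y y) := by
      rw [isUnit_iff_not_dvd] at hw ⊢
      intro h
      apply hw
      rw [hQ]
      exact dvd_add ((hα2.trans (Dvd.intro_left (α) (by ring))).mul_right _) h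
    obtain ⟨S, hS⟩ := iso_even hA hc (e := y) (z := α • e) (by rw [bil_smul_right, hye, mul_zero])
      hyu (by rw [bil_smul_left]; exact hα2.mul_right _) hcu (by rwa [add_comm, ← hwy])
    obtain ⟨T, hT⟩ := iso_perp hA hc hye hyu he hcu
    refine ⟨T * S, fun x => ?_⟩
    rw [← mulVec_mulVec, ← hT, ← hS, add_comm, ← hwy]

/-! ### Congruence of quadratic forms -/

/-- Congruence of functions modulo `2 ^ (a + 1)`. -/
def Cong (a : ℕ) (f g : (n → ℤ_[2]) → ℤ_[2]) : Prop := ∀ x, (2 : ℤ_[2]) ^ (a + 1) ∣ f x - g x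

lemma bil_mul (A Y : Matrix n n ℤ_[2]) (x y : n → ℤ_[2]) :
    bil (Yᵀ * A * Y) x y = bil A (Y *ᵥ x) (Y *ᵥ y) := by
  unfold bil
  rw [← mulVec_mulVec, ← mulVec_mulVec, dotProduct_mulVec, vecMul_transpose]

lemma bil_single [DecidableEq n] (A : Matrix n n ℤ_[2]) (i j : n) :
    bil A (Pi.single i 1) (Pi.single j 1) = A i j := by
  simp [bil]

/-- A symmetric matrix lies in `2 ^ a S_e` exactly when its quadratic form takes values divisible by
`2 ^ (a + 1)`. -/
lemma even_form_iff [DecidableEq n] {D : Matrix n n ℤ_[2]} (hD : D.IsSymm) (a : ℕ) :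
    (∀ i j, ((2 : ℤ_[2]) ^ a * (if i = j then 2 else 1)) ∣ D i j) ↔
      ∀ x, (2 : ℤ_[2]) ^ (a + 1) ∣ bil D x x := by
  constructor
  · intro h x
    choose E hE using h
    -- Write `D = T + Tᵀ` with `T` upper triangular for an arbitrary ordering of the indices.
    let o := Fintype.equivFin n
    let T : Matrix n n ℤ_[2] := Matrix.of fun i j =>
      if i = j then 2 ^ a * E i j else if o i < o j then D i j else 0
    have hT : D = T + Tᵀ := by
      ext i j
      simp only [T, Matrix.add_apply, transpose_apply, of_apply]
      rcases lt_trichotomy (o i) (o j) with h | h | h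
      · have hij : i ≠ j := fun h' => by simp [h'] at h
        simp [hij, hij.symm, h, h.not_gt]
      · obtain rfl := o.injective h
        simp only [if_true]
        rw [hE i i, if_pos rfl]; ring
      · have hij : i ≠ j := fun h' => by simp [h'] at h
        simp [hij, hij.symm, h, h.not_gt, hD.apply]
    have hT' : ∀ i j, (2 : ℤ_[2]) ^ a ∣ T i j := by
      intro i j
      simp only [T, of_apply]
      split_ifs
      · exact dvd_mul_right _ _
      · exact (dvd_mul_right _ _).trans (Dvd.intro _ (hE i j).symm)
      · exact dvd_zero _
    have h2 : bil D x x = 2 * bil T x x := by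
      rw [hT]
      have : bil Tᵀ x x = bil T x x := by
        unfold bil
        rw [mulVec_transpose, dotProduct_comm, dotProduct_mulVec]
      simp only [bil, add_mulVec, dotProduct_add] at this ⊢
      rw [this]; ring
    rw [h2, pow_succ']
    refine mul_dvd_mul_left _ ?_
    exact Finset.dvd_sum fun i _ => Dvd.dvd.mul_left (Finset.dvd_sum fun j _ =>
      (hT' i j).mul_right _) _
  · intro h i j
    by_cases hij : i = j
    · subst hij
      have := h (Pi.single i 1)
      rw [bil_single, pow_succ] at this
      simpa using this
    · have h1 := h (Pi.single i 1)
      have h2 := h (Pi.single j 1)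
      have h3 := h (Pi.single i 1 + Pi.single j 1)
      simp only [bil_add_left, bil_add_right, bil_single] at h1 h2 h3
      rw [hD.apply i j] at h3
      rw [if_neg hij, mul_one]
      have h4 := dvd_sub (dvd_sub h3 h1) h2
      rw [show D i i + D i j + (D i j + D j j) - D i i - D j j = 2 * D i j by ring, pow_succ'] at h4
      exact (mul_dvd_mul_iff_left two_ne_zero).1 h4

lemma densCond_iff [DecidableEq n] {A : Matrix n n ℤ_[2]} (hA : A.IsSymm) (a : ℕ)
    (Y : Matrix n n ℤ_[2]) : KM.densCond 2 A A a Y ↔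
      Cong a (fun x => bil A (Y *ᵥ x) (Y *ᵥ x)) (fun x => bil A x x) := by
  have hs : (Yᵀ * A * Y - A).IsSymm := by
    simp [IsSymm, transpose_mul, hA.eq, Matrix.mul_assoc]
  have := even_form_iff hs a
  simp only [KM.densCond, Cong]
  push_cast
  rw [this]
  refine forall_congr' fun x => ?_
  have : bil (Yᵀ * A * Y - A) x x = bil (Yᵀ * A * Y) x x - bil A x x := by
    simp [bil, sub_mulVec, dotProduct_sub]
  rw [this, bil_mul]

lemma bil_cong {a : ℕ} {A B : Matrix n n ℤ_[2]} (hA : A.IsSymm) (hB : B.IsSymm)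
    (h : Cong a (fun x => bil A x x) (fun x => bil B x x)) (x y : n → ℤ_[2]) :
    (2 : ℤ_[2]) ^ a ∣ bil A x y - bil B x y := by
  have h1 := h x
  have h2 := h y
  have h3 := h (x + y)
  simp only [bil_add_left, bil_add_right, bil_comm y x hA, bil_comm y x hB] at h1 h2 h3
  have h4 := dvd_sub (dvd_sub h3 h1) h2
  rw [show ∀ p q r p' q' r' : ℤ_[2], p + q + (q + r) - (p' + q' + (q' + r')) - (p - p') - (r - r') =
    2 * (q - q') by intros; ring, pow_succ'] at h4
  exact (mul_dvd_mul_iff_left two_ne_zero).1 h4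

/-- Once `2 ^ a ∤ det A`, every solution modulo `2 ^ a` is invertible. -/
lemma isUnit_of_cong_det [DecidableEq n] {A Y : Matrix n n ℤ_[2]} (hA : A.IsSymm) {a : ℕ}
    (hd : ¬ (2 : ℤ_[2]) ^ a ∣ A.det)
    (h : Cong a (fun x => bil A (Y *ᵥ x) (Y *ᵥ x)) (fun x => bil A x x)) : IsUnit Y.det := by
  have h1 := (densCond_iff hA a Y).2 h
  have ker : ∀ x : ℤ_[2], PadicInt.toZModPow a x = 0 ↔ (2 : ℤ_[2]) ^ a ∣ x := fun x => by
    rw [← RingHom.mem_ker, PadicInt.ker_toZModPow, Ideal.mem_span_singleton]; simp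
  have h2 : (2 : ℤ_[2]) ^ a ∣ (Yᵀ * A * Y).det - A.det := by
    rw [← ker, map_sub, RingHom.map_det, RingHom.map_det, sub_eq_zero]
    congr 1
    ext i j
    rw [← sub_eq_zero]
    simp only [RingHom.mapMatrix_apply, map_apply]
    rw [← map_sub, ker]
    have := h1 i j
    push_cast at this
    exact (dvd_mul_right _ _).trans this
  rw [isUnit_iff_not_dvd]
  rintro ⟨t, ht⟩
  apply hd
  rw [det_mul, det_mul, det_transpose, ht] at h2
  have hu : IsUnit (4 * t ^ 2 - 1) := by
    rw [isUnit_iff_not_dvd]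
    intro h
    have : (2 : ℤ_[2]) ∣ 1 := by
      have := dvd_sub (Dvd.intro (2 * t ^ 2) rfl : (2 : ℤ_[2]) ∣ 2 * (2 * t ^ 2)) h
      ring_nf at this; exact this
    exact (isUnit_iff_not_dvd 1).1 isUnit_one this
  rw [show 2 * t * A.det * (2 * t) - A.det = A.det * (4 * t ^ 2 - 1) by ring] at h2
  exact hu.dvd_mul_right.1 h2

lemma exists_twist_matrix [DecidableEq n] {A : Matrix n n ℤ_[2]} (hA : A.IsSymm) (c : ℤ_[2])
    (w : n → ℤ_[2]) : ∃ M : Matrix n n ℤ_[2], M.IsSymm ∧ ∀ x y, bil M x y =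
      bil A x y + (c - 1) * (bil A x w * bil A y w) * Ring.inverse (bil A w w) := by
  refine ⟨A + ((c - 1) * Ring.inverse (bil A w w)) • vecMulVec (A *ᵥ w) (A *ᵥ w), ?_, fun x y => ?_⟩
  · simp [IsSymm, hA.eq, transpose_vecMulVec]
  · simp only [bil, add_mulVec, dotProduct_add, smul_mulVec, dotProduct_smul, vecMulVec_mulVec,
      op_smul_eq_smul, smul_eq_mul, dotProduct_comm _ y]
    ring

lemma frac_cong {a : ℕ} {c p p' q q' : ℤ_[2]} (hc : (2 : ℤ_[2]) ∣ c)
    (hp : (2 : ℤ_[2]) ^ a ∣ p - p') (hq : (2 : ℤ_[2]) ^ a ∣ q - q')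
    (hu : IsUnit q) (hu' : IsUnit q') :
    (2 : ℤ_[2]) ^ (a + 1) ∣ c * p ^ 2 * Ring.inverse q - c * p' ^ 2 * Ring.inverse q' := by
  have h1 := Ring.mul_inverse_cancel _ hu
  have h2 := Ring.mul_inverse_cancel _ hu'
  obtain ⟨c', rfl⟩ := hc
  obtain ⟨s, hs⟩ := hp
  obtain ⟨t, ht⟩ := hq
  generalize Ring.inverse q = i at *
  generalize Ring.inverse q' = i' at *
  refine ⟨c' * (s * (p + p') * i - p' ^ 2 * i * i' * t), ?_⟩
  rw [pow_succ]
  linear_combination (2 * c' * (p + p') * i) * hs - (2 * c' * p' ^ 2 * i * i') * ht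
    + (2 * c' * p' ^ 2 * i') * h1 - (2 * c' * p' ^ 2 * i) * h2

lemma isUnit_of_dvd_sub {a : ℕ} (ha : a ≠ 0) {x y : ℤ_[2]} (h : (2 : ℤ_[2]) ^ a ∣ x - y)
    (hx : IsUnit x) : IsUnit y := by
  rw [isUnit_iff_not_dvd] at hx ⊢
  exact fun hy => hx ((dvd_iff_dvd_of_dvd_sub ((dvd_pow_self 2 ha).trans h)).2 hy)

/-! ### Counting modulo `2 ^ a` -/

/-- Reduction of a vector modulo `2 ^ a`. -/
def redV (a : ℕ) (w : n → ℤ_[2]) : n → ZMod (2 ^ a) := fun i => PadicInt.toZModPow a (w i)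

/-- Reduction of a matrix modulo `2 ^ a`. -/
def redM (a : ℕ) (Y : Matrix n n ℤ_[2]) : Matrix n n (ZMod (2 ^ a)) :=
  Y.map (PadicInt.toZModPow a)

lemma redM_mul (a : ℕ) (Y Z : Matrix n n ℤ_[2]) : redM a (Y * Z) = redM a Y * redM a Z := by
  simp [redM, Matrix.map_mul]

lemma redM_one [DecidableEq n] (a : ℕ) : redM a (1 : Matrix n n ℤ_[2]) = 1 := by
  simp [redM]

lemma redV_mulVec (a : ℕ) (Y : Matrix n n ℤ_[2]) (w : n → ℤ_[2]) :
    redV a (Y *ᵥ w) = redM a Y *ᵥ redV a w := by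
  ext i
  simp [redV, redM, mulVec, dotProduct, map_sum]

lemma redV_eq {a : ℕ} {v w : n → ℤ_[2]} (h : redV a v = redV a w) :
    ∃ t, w = v + (2 : ℤ_[2]) ^ a • t := by
  have : ∀ i, ∃ t, w i - v i = 2 ^ a * t := fun i => by
    have hi := congrFun h i
    simp only [redV] at hi
    rw [eq_comm, ← sub_eq_zero, ← map_sub, ← RingHom.mem_ker, PadicInt.ker_toZModPow,
      Ideal.mem_span_singleton] at hi
    obtain ⟨t, ht⟩ := hi
    exact ⟨t, by simpa using ht⟩
  choose t ht using this
  refine ⟨t, funext fun i => ?_⟩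
  simp only [Pi.add_apply, Pi.smul_apply, smul_eq_mul]
  linear_combination ht i

lemma twist_cong {a : ℕ} (ha : a ≠ 0) {A : Matrix n n ℤ_[2]} {c : ℤ_[2]}
    (hc : (2 : ℤ_[2]) ∣ c - 1) {v w : n → ℤ_[2]} (hv : IsUnit (bil A v v))
    (h : redV a v = redV a w) : Cong a (twist c A v) (twist c A w) := by
  obtain ⟨t, rfl⟩ := redV_eq h
  intro x
  have hd : (2 : ℤ_[2]) ^ a ∣ bil A v v - bil A (v + (2 : ℤ_[2]) ^ a • t) (v + (2 : ℤ_[2]) ^ a • t) := by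
    simp only [bil_add_left, bil_add_right, bil_smul_left, bil_smul_right]
    exact ⟨- bil A v t - bil A t v - 2 ^ a * bil A t t, by ring⟩
  simp only [twist]
  rw [add_sub_add_left_eq_sub]
  refine frac_cong hc ?_ hd hv (isUnit_of_dvd_sub ha hd hv)
  simp only [bil_add_right, bil_smul_right]
  exact ⟨- bil A x t, by ring⟩

/-- Vectors modulo `2 ^ a` with a lift of unit norm (for `a ≠ 0` all lifts then have unit norm). -/
def unitVecs (a : ℕ) (A : Matrix n n ℤ_[2]) : Set (n → ZMod (2 ^ a)) :=
  {w | ∃ ω, redV a ω = w ∧ IsUnit (bil A ω ω)}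

/-- The pairs `(w, X)` modulo `2 ^ a` such that `w` has unit norm for `A` and the invertible matrix
`X` carries `A'` to the twist of `A` along `w`, modulo `2 ^ a S_e`. -/
def pairs [DecidableEq n] (a : ℕ) (c : ℤ_[2]) (A A' : Matrix n n ℤ_[2]) :
    Set ((n → ZMod (2 ^ a)) × Matrix n n (ZMod (2 ^ a))) :=
  {P | ∃ ω Y, redV a ω = P.1 ∧ redM a Y = P.2 ∧ IsUnit (bil A ω ω) ∧ IsUnit Y.det ∧
    Cong a (fun x => bil A' (Y *ᵥ x) (Y *ᵥ x)) (twist c A ω)}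

/-- The map `(w, X) ↦ (Xw, X⁻¹)` is injective into the pairs for `(A', A)` and the inverse factor. -/
lemma ncard_pairs_le [DecidableEq n] {a : ℕ} (ha : a ≠ 0) {c d : ℤ_[2]} (hcd : c * d = 1)
    (hd : (2 : ℤ_[2]) ∣ d - 1) {A A' : Matrix n n ℤ_[2]} (hA : A.IsSymm) (hA' : A'.IsSymm) :
    (pairs a c A A').ncard ≤ (pairs a d A' A).ncard := by
  have hcu : IsUnit c := .of_mul_eq_one _ hcd
  refine Set.ncard_le_ncard_of_injOn (fun P => (P.2 *ᵥ P.1, P.2⁻¹)) ?_ ?_ (Set.toFinite _)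
  · rintro ⟨w, X⟩ ⟨ω, Y, rfl, rfl, hω, hY, h⟩
    obtain ⟨M, hM, hMb⟩ := exists_twist_matrix hA c ω
    have h1 := Ring.mul_inverse_cancel _ hω
    have hYAY : (Yᵀ * A' * Y).IsSymm := by
      simp [IsSymm, transpose_mul, hA'.eq, Matrix.mul_assoc]
    have hMω : ∀ y, bil M y ω = c * bil A y ω := fun y => by
      rw [hMb]; linear_combination ((c - 1) * bil A y ω) * h1
    have hb : ∀ y, (2 : ℤ_[2]) ^ a ∣ bil A' (Y *ᵥ y) (Y *ᵥ ω) - c * bil A y ω := fun y => by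
      rw [← hMω, ← bil_mul]
      refine bil_cong hYAY hM (fun x => ?_) y ω
      have := h x
      simp only [twist] at this
      simp only [hMb, bil_mul, ← pow_two]
      exact this
    have hω' : IsUnit (bil A' (Y *ᵥ ω) (Y *ᵥ ω)) :=
      isUnit_of_dvd_sub ha ((dvd_sub_comm).1 (hb ω)) (hcu.mul hω)
    refine ⟨Y *ᵥ ω, Y⁻¹, redV_mulVec _ _ _, ?_, hω', ?_, ?_⟩
    · refine (Matrix.inv_eq_right_inv ?_).symm
      rw [← redM_mul, Matrix.mul_nonsing_inv _ hY, redM_one]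
    · exact Matrix.isUnit_nonsing_inv_det _ hY
    · intro x
      obtain ⟨y, rfl⟩ : ∃ y, x = Y *ᵥ y := ⟨Y⁻¹ *ᵥ x, by
        rw [mulVec_mulVec, Matrix.mul_nonsing_inv _ hY, one_mulVec]⟩
      simp only [mulVec_mulVec, Matrix.nonsing_inv_mul _ hY, one_mulVec]
      have h2 := frac_cong hd (hb y) (hb ω) hω' (hcu.mul hω)
      have h3 := h y
      have h4 := dvd_add h2 h3
      rw [← dvd_neg]
      convert h4 using 1
      simp only [twist, Ring.mul_inverse_rev]
      have hic : Ring.inverse c = d := by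
        rw [← mul_one (Ring.inverse c), ← hcd, ← mul_assoc, Ring.inverse_mul_cancel _ hcu, one_mul]
      rw [hic]
      linear_combination (bil A y ω ^ 2 * Ring.inverse (bil A ω ω) * (c * d - c + 1)) * hcd
  · rintro ⟨w, X⟩ ⟨ω, Y, rfl, rfl, hω, hY, h⟩ ⟨w', X'⟩ ⟨ω', Y', rfl, rfl, hω', hY', h'⟩ heq
    have hu : ∀ {Z : Matrix n n ℤ_[2]}, IsUnit Z.det → IsUnit (redM a Z).det := fun {Z} hZ => by
      have := hZ.map (PadicInt.toZModPow (p := 2) a)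
      rwa [RingHom.map_det] at this
    simp only [Prod.mk.injEq] at heq ⊢
    obtain ⟨e1, e2⟩ := heq
    have e3 : redM a Y = redM a Y' := by
      rw [← Matrix.nonsing_inv_nonsing_inv _ (hu hY), e2, Matrix.nonsing_inv_nonsing_inv _ (hu hY')]
    refine ⟨?_, e3⟩
    rw [← e3] at e1
    simpa [mulVec_mulVec, Matrix.nonsing_inv_mul _ (hu hY)] using
      congrArg ((redM a Y)⁻¹ *ᵥ ·) e1

/-- The fibre of `pairs` over each `w` is a coset of the stabilizer of `A'`. -/
lemma ncard_pairs [DecidableEq n] {a : ℕ} (ha : a ≠ 0) {c : ℤ_[2]}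
    (hc : (8 : ℤ_[2]) ∣ c - 5) (hcu : IsUnit c) {A A' : Matrix n n ℤ_[2]} (hA : A.IsSymm)
    (hA' : A'.IsSymm) (hd : ¬ (2 : ℤ_[2]) ^ a ∣ A'.det) {e : n → ℤ_[2]} (he : IsUnit (bil A e e))
    (hAA' : ∀ x, bil A' x x = twist c A e x) :
    (pairs a c A A').ncard = (unitVecs a A).ncard * KM.Acount 2 A' A' a := by
  have hc2 : (2 : ℤ_[2]) ∣ c - 1 := by
    obtain ⟨t, ht⟩ := hc
    exact ⟨4 * t + 2, by linear_combination ht⟩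
  have key : ∀ w, ∃ S : Matrix n n ℤ_[2], w ∈ unitVecs a A → IsUnit S.det ∧ ∃ ω, redV a ω = w ∧
      IsUnit (bil A ω ω) ∧ ∀ x, twist c A ω x = bil A' (S *ᵥ x) (S *ᵥ x) := by
    intro w
    by_cases hw : w ∈ unitVecs a A
    · obtain ⟨ω, hω, hωu⟩ := hw
      obtain ⟨S, hS⟩ := twist_iso hA hc hcu he hωu
      obtain ⟨T, hT⟩ := twist_iso hA hc hcu hωu he
      have hST : IsUnit (S * T).det := by
        refine isUnit_of_cong_det hA' hd fun x => ?_
        simp only [← mulVec_mulVec, hAA', ← hS, ← hT, sub_self, dvd_zero]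
      rw [det_mul] at hST
      exact ⟨S, fun _ => ⟨isUnit_of_mul_isUnit_left hST, ω, hω, hωu, fun x => by
        rw [hAA', hS]⟩⟩
    · exact ⟨1, fun h => (hw h).elim⟩
  -- `S w` is a fixed base point of the fibre over `w`.
  choose S hS using key
  have hcard : KM.Acount 2 A' A' a = {X : Matrix n n (ZMod (2 ^ a)) |
    ∃ Y : Matrix n n ℤ_[2], redM a Y = X ∧ KM.densCond 2 A' A' a Y}.ncard := rfl
  rw [hcard, ← Set.ncard_prod]
  symm
  refine Set.ncard_congr (fun P _ => (P.1, P.2 * redM a (S P.1))) ?_ ?_ ?_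
  · rintro ⟨w, X⟩ ⟨hw, Y, rfl, hY⟩
    obtain ⟨hSu, ω, hω, hωu, hSω⟩ := hS w hw
    rw [densCond_iff hA'] at hY
    refine ⟨ω, Y * S w, hω, redM_mul _ _ _, hωu, ?_, fun x => ?_⟩
    · rw [det_mul]
      exact (isUnit_of_cong_det hA' hd hY).mul hSu
    · simp only [hSω, ← mulVec_mulVec]
      exact hY _
  · rintro ⟨w, X⟩ ⟨w', X'⟩ ⟨hw, -⟩ - heq
    simp only [Prod.mk.injEq] at heq ⊢
    obtain ⟨rfl, e2⟩ := heq
    refine ⟨rfl, ?_⟩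
    have := congrArg (· * redM a (S w)⁻¹) e2
    simpa [Matrix.mul_assoc, ← redM_mul, Matrix.mul_nonsing_inv _ (hS w hw).1, redM_one] using this
  · rintro ⟨w, X⟩ ⟨ω', Y, hω', rfl, hωu', hY, h⟩
    have hw : w ∈ unitVecs a A := ⟨ω', hω', hωu'⟩
    obtain ⟨hSu, ω, hω, hωu, hSω⟩ := hS w hw
    refine ⟨(w, redM a (Y * (S w)⁻¹)), ⟨hw, _, rfl, ?_⟩, ?_⟩
    · rw [densCond_iff hA']
      intro x
      have h1 := h ((S w)⁻¹ *ᵥ x)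
      have h2 := twist_cong ha hc2 hωu' (hω'.trans hω.symm) ((S w)⁻¹ *ᵥ x)
      have h3 := dvd_add h1 h2
      rw [sub_add_sub_cancel, hSω] at h3
      simpa [mulVec_mulVec, Matrix.mul_nonsing_inv _ hSu] using h3
    · simp only [Prod.mk.injEq, true_and]
      rw [← redM_mul, Matrix.mul_assoc, Matrix.nonsing_inv_mul _ hSu, Matrix.mul_one]

lemma Acount_eq [DecidableEq n] {a : ℕ} (ha : a ≠ 0) {c d : ℤ_[2]} (hcd : c * d = 1)
    (hc : (8 : ℤ_[2]) ∣ c - 5) (hd : (8 : ℤ_[2]) ∣ d - 5) {A A' : Matrix n n ℤ_[2]} (hA : A.IsSymm)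
    (hA' : A'.IsSymm) (hdA : ¬ (2 : ℤ_[2]) ^ a ∣ A.det) (hdA' : ¬ (2 : ℤ_[2]) ^ a ∣ A'.det)
    {e : n → ℤ_[2]} (he : IsUnit (bil A e e)) (he' : IsUnit (bil A' e e))
    (hAA' : ∀ x, bil A' x x = twist c A e x) (hA'A : ∀ x, bil A x x = twist d A' e x) :
    KM.Acount 2 A A a = KM.Acount 2 A' A' a := by
  have two : ∀ {c : ℤ_[2]}, (8 : ℤ_[2]) ∣ c - 5 → (2 : ℤ_[2]) ∣ c - 1 := by
    rintro c ⟨t, ht⟩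
    exact ⟨4 * t + 2, by linear_combination ht⟩
  have hdc : d * c = 1 := by rw [mul_comm, hcd]
  have hV : unitVecs a A = unitVecs a A' := by
    ext w
    refine exists_congr fun ω => and_congr_right fun _ => ?_
    rw [isUnit_iff_not_dvd, isUnit_iff_not_dvd, hAA', twist,
      dvd_add_left (((two hc).mul_right _).mul_right _)]
  have h1 := ncard_pairs ha hc (.of_mul_eq_one _ hcd) hA hA' hdA' he hAA'
  have h2 := ncard_pairs ha hd (.of_mul_eq_one _ hdc) hA' hA hdA he' hA'A
  have h3 := le_antisymm (ncard_pairs_le ha hcd (two hd) hA hA') (ncard_pairs_le ha hdc (two hc) hA' hA)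
  rw [h1, h2, hV] at h3
  refine (Nat.eq_of_mul_eq_mul_left ?_ h3).symm
  rw [Set.ncard_pos]
  exact ⟨redV a e, e, rfl, he'⟩

lemma eventually_not_dvd {x : ℤ_[2]} (hx : x ≠ 0) : ∀ᶠ a in atTop, ¬ (2 : ℤ_[2]) ^ a ∣ x := by
  have h2 : ¬ IsUnit (2 : ℤ_[2]) := by simp [isUnit_iff_not_dvd]
  obtain ⟨N, hN⟩ := FiniteMultiplicity.of_not_isUnit h2 hx
  filter_upwards [eventually_gt_atTop N] with a ha h
  exact hN ((pow_dvd_pow 2 ha).trans h)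

lemma Acount_smul [DecidableEq n] {c : ℤ_[2]} (hc : IsUnit c) (A : Matrix n n ℤ_[2]) (a : ℕ) :
    KM.Acount 2 (c • A) (c • A) a = KM.Acount 2 A A a := by
  have : ∀ Y, KM.densCond 2 (c • A) (c • A) a Y ↔ KM.densCond 2 A A a Y := fun Y => by
    unfold KM.densCond
    refine forall_congr' fun i => forall_congr' fun j => ?_
    rw [Matrix.mul_smul, Matrix.smul_mul, ← smul_sub, Matrix.smul_apply, smul_eq_mul,
      hc.dvd_mul_left]
  simp only [KM.Acount, this]

end LD

/-- `α_2(u₀ ⊥ 5B₁) = α_2(u₀ ⊥ B₁)`. -/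
theorem statement16 (k : ℕ) (u₀ : ℤ_[2]) (hu₀ : IsUnit u₀)
    (B₁ : Matrix (Fin k) (Fin k) ℤ_[2]) (hB₁s : B₁.IsSymm) (hB₁d : B₁.det ≠ 0) :
    KM.locDens 2
        (Matrix.fromBlocks (Matrix.of fun (_ : Fin 1) (_ : Fin 1) => u₀) 0 0
          ((5 : ℤ_[2]) • B₁)) =
      KM.locDens 2
        (Matrix.fromBlocks (Matrix.of fun (_ : Fin 1) (_ : Fin 1) => u₀) 0 0 B₁) := by
  have h5 : IsUnit (5 : ℤ_[2]) := by
    rw [LD.isUnit_iff_not_dvd]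
    intro h
    have : (2 : ℤ_[2]) ∣ 1 := by
      have := dvd_sub h (Dvd.intro 2 rfl : (2 : ℤ_[2]) ∣ 2 * 2)
      norm_num at this
      exact this
    exact (LD.isUnit_iff_not_dvd 1).1 isUnit_one this
  obtain ⟨c, hc⟩ := h5.exists_right_inv
  have hc8 : (8 : ℤ_[2]) ∣ c - 5 := ⟨-3 * c, by linear_combination 5 * hc⟩
  have hcu : IsUnit c := .of_mul_eq_one 5 (by rw [mul_comm, hc])
  let D : ℤ_[2] → Matrix (Fin 1 ⊕ Fin k) (Fin 1 ⊕ Fin k) ℤ_[2] := fun u =>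
    Matrix.fromBlocks (Matrix.of fun (_ : Fin 1) (_ : Fin 1) => u) 0 0 B₁
  have hDs : ∀ u, (D u).IsSymm := fun u => by
    refine Matrix.IsSymm.fromBlocks ?_ (by simp) hB₁s
    ext; simp
  have hDd : ∀ u, u ≠ 0 → (D u).det ≠ 0 := fun u hu => by
    simp [D, hu, hB₁d]
  let e : Fin 1 ⊕ Fin k → ℤ_[2] := Pi.single (Sum.inl 0) 1
  have hDe : ∀ u, LD.bil (D u) e e = u := fun u => by
    rw [LD.bil_single]; simp [D]
  have hDx : ∀ u x, LD.bil (D u) x e = x (Sum.inl 0) * u := fun u x => by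
    simp [LD.bil, D, e, dotProduct, Fintype.sum_sum_type, Matrix.col]
  have hDq : ∀ u x, LD.bil (D u) x x = u * x (Sum.inl 0) ^ 2 +
      (fun j => x (Sum.inr j)) ⬝ᵥ B₁ *ᵥ (fun j => x (Sum.inr j)) := fun u x => by
    simp only [LD.bil, D, dotProduct, mulVec, Fintype.sum_sum_type, Matrix.fromBlocks_apply₁₁,
      Matrix.fromBlocks_apply₁₂, Matrix.fromBlocks_apply₂₁, Matrix.fromBlocks_apply₂₂, Matrix.of_apply,
      Matrix.zero_apply, Finset.univ_unique, Finset.sum_singleton, zero_mul, Finset.sum_const_zero,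
      add_zero, zero_add, Fin.default_eq_zero]
    ring
  have htw : ∀ b u, IsUnit u → ∀ x, LD.bil (D (b * u)) x x = LD.twist b (D u) e x := by
    intro b u hu x
    have h1 := Ring.mul_inverse_cancel _ hu
    rw [LD.twist, hDq, hDq, hDx, hDe]
    linear_combination (- (b - 1) * u * x (Sum.inl 0) ^ 2) * h1
  have h5D : Matrix.fromBlocks (Matrix.of fun (_ : Fin 1) (_ : Fin 1) => u₀) 0 0
          ((5 : ℤ_[2]) • B₁) = (5 : ℤ_[2]) • D (c * u₀) := by
    simp only [D, Matrix.fromBlocks_smul, smul_zero]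
    congr 1
    ext i j
    simp only [Matrix.of_apply, Matrix.smul_apply, smul_eq_mul]
    linear_combination (-u₀) * hc
  have hcount : ∀ᶠ a in atTop, KM.Acount 2 ((5 : ℤ_[2]) • D (c * u₀)) ((5 : ℤ_[2]) • D (c * u₀)) a =
      KM.Acount 2 (D u₀) (D u₀) a := by
    filter_upwards [eventually_ne_atTop 0,
      LD.eventually_not_dvd (hDd u₀ hu₀.ne_zero), LD.eventually_not_dvd (hDd _ (hcu.mul hu₀).ne_zero)]
      with a ha h1 h2
    rw [LD.Acount_smul h5]
    refine (LD.Acount_eq ha (c := c) (d := 5) (by rw [mul_comm, hc]) hc8 (by simp) (hDs _) (hDs _)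
      h1 h2 (e := e) (by rwa [hDe]) (by rw [hDe]; exact hcu.mul hu₀) (htw c u₀ hu₀) ?_).symm
    intro x
    rw [← htw 5 _ (hcu.mul hu₀), ← mul_assoc, hc, one_mul]
  rw [h5D]
  change KM.locDens 2 _ = KM.locDens 2 (D u₀)
  unfold KM.locDens KM.locDensPair limUnder
  congr 1
  refine Filter.map_congr ?_
  filter_upwards [hcount] with a ha
  rw [ha]
end
end

section
/- Let m be a positive even integer and let B ∈ S_m(ℤ_2)_o^× be a nondegenerate odd symmetric matrix over ℤ_2. Write B₁ ≈ B₂ if B₂ ∼ ξB₁ for some unit ξ ∈ ℤ_2^*. Let S̃(B) = {B' ∈ S_m(ℤ_2) : B' ≈ B} and S'(B) = {B' ∈ S_{m-1}(ℤ_2) : (1) ⊥ B' ≈ B} (every such B' is nondegenerate). Then the sets of ∼-equivalence classes S̃(B)/∼ and S'(B)/∼ are finite, and ∑_{[B'] ∈ S'(B)/∼} 1/α_2(B') = #(S̃(B)/∼) / (2 α_2(B)), the sum being well defined since α_2 is constant on ∼-classes. -/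
/-!
Fix `k` with `det B ∣ 2 ^ k` and a level `a ≥ k + 2`, and reduce symmetric matrices modulo
`2 ^ a S_e`. Three facts turn the identity into a count of residues.

* By a Newton iteration (`stability`), a symmetric matrix congruent to `B` modulo `2 ^ a S_e` is
  equivalent to `B`. Hence a class is a union of cosets, and a set of matrices with determinant
  dividing `2 ^ k` that is stable under equivalence has finitely many classes, whose residues
  partition the residues of the set (`classes_sum`).
* `GL_m(ℤ/2^a)` acts transitively on the residues of the class of `B`, and the stabilizer of the
  residue of `B` is counted by the definition of the local density (`orbit_stabilizer`). So
  `1/α_2(B)` is the number of residues of the class of `B`, times a factor depending only on `m`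
  and `a` (`inv_locDens_eq`). The sum over `S'(B)/∼` is therefore a multiple of the number of
  residues of `S'(B)`, and, since scaling by a unit preserves the number of residues of a class,
  `#(S̃(B)/∼) / α_2(B)` is a multiple of the number of residues of `S̃(B)`.
* The residues of `S̃(B)` with odd first diagonal entry are counted in two ways. The diagonal modulo
  `2` of a symmetric matrix is a linear form that `GL_m` transforms contragrediently; as it is
  nonzero for odd matrices and `GL_m(𝔽_2)` is transitive on nonzero forms, a proportion
  `2 ^ (m - 1) / (2 ^ m - 1)` of all residues has odd first entry (`ncard_odd_entry`). On the other
  hand a symmetric matrix with unit first entry `u` is, in a unique way, `u` times the transform of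
  some `(1) ⊥ D` by a unipotent matrix with first row `(1, r)`, and it lies in `S̃(B)` iff
  `D ∈ S'(B)`; this gives `2 ^ (a m)` residues for each residue of `S'(B)` (`ncard_unit_corner`).

The identity then follows from the ratio of the orders of `GL_m(ℤ/2^a)` and `GL_{m-1}(ℤ/2^a)`.
-/

open Matrix Filter

open scoped Classical

noncomputable section

namespace KM

/-! ### Counting lemmas -/

lemma ncard_of_fibers {α β : Type*} {S : Set α} {T : Set β} (hS : S.Finite) (hT : T.Finite)
    (f : α → β) (N : ℕ) (hf : ∀ x ∈ S, f x ∈ T)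
    (h : ∀ y ∈ T, {x | x ∈ S ∧ f x = y}.ncard = N) : S.ncard = T.ncard * N := by
  lift S to Finset α using hS
  lift T to Finset β using hT
  rw [Set.ncard_coe_finset, Set.ncard_coe_finset,
    Finset.card_eq_sum_card_fiberwise (f := f) (t := T) (fun x hx => hf x hx),
    Finset.sum_const_nat (m := N)]
  intro y hy
  rw [← h y hy, ← Set.ncard_coe_finset]
  congr 1
  ext x
  simp

/-- Two maps on `A` that identify the same pairs of points have images of the same size. -/
lemma ncard_image_eq {α β γ : Type*} (A : Set α) (f : α → β) (g : α → γ)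
    (h : ∀ x ∈ A, ∀ y ∈ A, f x = f y ↔ g x = g y) : (f '' A).ncard = (g '' A).ncard := by
  have key : ∀ y : (f '' A), ∃ x ∈ A, f x = y := fun y => y.2
  choose s hsA hs using key
  refine Nat.card_congr (Equiv.ofBijective (fun y => ⟨g (s y), s y, hsA y, rfl⟩) ⟨?_, ?_⟩)
  · intro y y' hy
    have : g (s y) = g (s y') := congrArg Subtype.val hy
    rw [← h _ (hsA y) _ (hsA y'), hs, hs] at this
    exact Subtype.ext this
  · rintro ⟨_, x, hx, rfl⟩
    refine ⟨⟨f x, x, hx, rfl⟩, Subtype.ext ?_⟩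
    exact (h _ (hsA _) _ hx).1 (hs _)

/-- All fibres of a surjective homomorphism of finite groups have the same size. -/
lemma ncard_fiber_hom {A C : Type*} [AddCommGroup A] [AddCommGroup C] [Finite A] [Finite C]
    (f : A →+ C) (hf : Function.Surjective f) (y : C) :
    Nat.card A = Nat.card C * {x | f x = y}.ncard := by
  rw [← Set.ncard_univ, ← Set.ncard_univ]
  refine ncard_of_fibers Set.finite_univ Set.finite_univ f _ (by simp) ?_
  intro z _
  obtain ⟨w, hw⟩ := hf (z - y)
  refine Set.ncard_congr (fun x _ => x - w) ?_ ?_ ?_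
  · rintro x ⟨-, rfl⟩
    simp [hw]
  · intro x x' _ _ h
    simpa using h
  · intro x hx
    exact ⟨x + w, ⟨trivial, by simp_all⟩, by simp⟩

/-! ### The lattices `2 ^ a S_e` and reduction modulo them -/

/-- The matrices whose off-diagonal entries lie in `2 ^ a ℤ_2` and whose diagonal entries lie in
`2 ^ (a + 1) ℤ_2`. Its symmetric elements form `2 ^ a S_m(ℤ_2)_e`. -/
def E (m a : ℕ) : AddSubgroup (Matrix (Fin m) (Fin m) ℤ_[2]) where
  carrier := {Z | ∀ i j, ((2 : ℤ_[2]) ^ a * (if i = j then 2 else 1)) ∣ Z i j}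
  zero_mem' := fun i j => by simp
  add_mem' := fun hx hy i j => dvd_add (hx i j) (hy i j)
  neg_mem' := fun hx i j => (dvd_neg).2 (hx i j)

lemma mem_E {m a : ℕ} {Z : Matrix (Fin m) (Fin m) ℤ_[2]} :
    Z ∈ E m a ↔ ∀ i j, ((2 : ℤ_[2]) ^ a * (if i = j then 2 else 1)) ∣ Z i j := Iff.rfl

lemma densCond_iff {m a : ℕ} {A B Y : Matrix (Fin m) (Fin m) ℤ_[2]} :
    densCond 2 A B a Y ↔ Yᵀ * A * Y - B ∈ E m a := by
  simp [densCond, mem_E]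

/-- The finite quotient in which symmetric matrices are compared modulo `2 ^ a S_m(ℤ_2)_e`. -/
abbrev Q (m a : ℕ) := Matrix (Fin m) (Fin m) ℤ_[2] ⧸ E m a

/-- Reduction modulo `E m a`. -/
abbrev red {m : ℕ} (a : ℕ) (C : Matrix (Fin m) (Fin m) ℤ_[2]) : Q m a := QuotientAddGroup.mk C

lemma red_eq {m a : ℕ} {C D : Matrix (Fin m) (Fin m) ℤ_[2]} :
    red a C = red a D ↔ C - D ∈ E m a := by
  rw [red, red, eq_comm, QuotientAddGroup.eq, neg_add_eq_sub]

lemma toZModPow_eq_iff {a : ℕ} {x y : ℤ_[2]} :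
    PadicInt.toZModPow a x = PadicInt.toZModPow a y ↔ (2 : ℤ_[2]) ^ a ∣ x - y := by
  rw [← sub_eq_zero, ← map_sub, ← RingHom.mem_ker, PadicInt.ker_toZModPow,
    Ideal.mem_span_singleton]
  simp

lemma toZMod_eq_iff {x y : ℤ_[2]} :
    PadicInt.toZMod x = PadicInt.toZMod y ↔ (2 : ℤ_[2]) ∣ x - y := by
  rw [← sub_eq_zero, ← map_sub, ← RingHom.mem_ker, PadicInt.ker_toZMod,
    PadicInt.maximalIdeal_eq_span_p, Ideal.mem_span_singleton]
  simp

lemma toZModPow_surj (a : ℕ) : Function.Surjective (PadicInt.toZModPow a : ℤ_[2] →+* _) :=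
  ZMod.ringHom_surjective _

lemma toZMod_surj : Function.Surjective (PadicInt.toZMod : ℤ_[2] →+* ZMod 2) :=
  ZMod.ringHom_surjective _

lemma isUnit_iff_not_dvd {x : ℤ_[2]} : IsUnit x ↔ ¬ (2 : ℤ_[2]) ∣ x := by
  have := PadicInt.maximalIdeal_eq_span_p (p := 2)
  rw [← not_iff_not, not_not, ← mem_nonunits_iff, ← IsLocalRing.mem_maximalIdeal, this,
    Ideal.mem_span_singleton]
  simp

lemma two_pow_ne (a : ℕ) : (2 : ℤ_[2]) ^ a ≠ 0 := pow_ne_zero _ two_ne_zero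

instance finite_Q (m a : ℕ) : Finite (Q m a) := by
  choose s hs using toZModPow_surj (a + 1)
  refine Finite.of_surjective
    (fun X : Matrix (Fin m) (Fin m) (ZMod (2 ^ (a + 1))) => red a (X.map s)) ?_
  intro z
  induction z using QuotientAddGroup.induction_on with
  | H Z =>
    refine ⟨Z.map (PadicInt.toZModPow (a + 1)), red_eq.2 fun i j => ?_⟩
    have h : (2 : ℤ_[2]) ^ (a + 1) ∣ s (PadicInt.toZModPow (a + 1) (Z i j)) - Z i j :=
      toZModPow_eq_iff.1 (hs _)
    refine dvd_trans ?_ h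
    rw [pow_succ]
    split_ifs
    · exact dvd_rfl
    · exact mul_dvd_mul_left _ (one_dvd _)

/-- The `ℤ_2`-equivalence class of `B`. -/
abbrev cls {m : ℕ} (B : Matrix (Fin m) (Fin m) ℤ_[2]) : Set (Matrix (Fin m) (Fin m) ℤ_[2]) :=
  {A | IntEquiv 2 B A}

section equiv
variable {m : ℕ} {A B C : Matrix (Fin m) (Fin m) ℤ_[2]}

lemma IntEquiv.refl (A : Matrix (Fin m) (Fin m) ℤ_[2]) : IntEquiv 2 A A := ⟨1, by simp, by simp⟩

lemma IntEquiv.trans (h : IntEquiv 2 A B) (h' : IntEquiv 2 B C) : IntEquiv 2 A C := by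
  obtain ⟨U, hU, rfl⟩ := h
  obtain ⟨V, hV, rfl⟩ := h'
  exact ⟨U * V, by rw [det_mul]; exact hU.mul hV, by simp [Matrix.mul_assoc]⟩

lemma conj_cancel {U V : Matrix (Fin m) (Fin m) ℤ_[2]} (h : U * V = 1) :
    Vᵀ * (Uᵀ * A * U) * V = A := by
  have h' : Vᵀ * Uᵀ = 1 := by rw [← transpose_mul, h, transpose_one]
  calc Vᵀ * (Uᵀ * A * U) * V = (Vᵀ * Uᵀ) * A * (U * V) := by simp only [Matrix.mul_assoc]
    _ = A := by rw [h, h']; simp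

lemma IntEquiv.symm (h : IntEquiv 2 A B) : IntEquiv 2 B A := by
  obtain ⟨U, hU, rfl⟩ := h
  exact ⟨U⁻¹, isUnit_nonsing_inv_det U hU, (conj_cancel (mul_nonsing_inv U hU)).symm⟩

lemma IntEquiv.isSymm (h : IntEquiv 2 A B) (hA : A.IsSymm) : B.IsSymm := by
  obtain ⟨U, hU, rfl⟩ := h
  simp [IsSymm, transpose_mul, hA.eq, Matrix.mul_assoc]

lemma IntEquiv.smul (h : IntEquiv 2 A B) (ξ : ℤ_[2]) : IntEquiv 2 (ξ • A) (ξ • B) := by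
  obtain ⟨U, hU, rfl⟩ := h
  exact ⟨U, hU, by simp⟩

lemma IntEquiv.det_dvd (h : IntEquiv 2 A B) {x : ℤ_[2]} (hA : A.det ∣ x) : B.det ∣ x := by
  obtain ⟨U, hU, rfl⟩ := h
  rw [det_mul, det_mul, det_transpose, mul_comm, ← mul_assoc]
  exact ((hU.mul hU).mul_left_dvd).2 hA

lemma cls_eq (h : IntEquiv 2 A B) : cls A = cls B :=
  Set.ext fun _ => ⟨fun h' => h.symm.trans h', fun h' => h.trans h'⟩

end equiv

/-- Every element of `2 ^ a S_e` is `2 ^ a (T + Tᵀ)` for some `T`, namely the upper triangle with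
half of the diagonal, divided by `2 ^ a`. -/
lemma exists_split {m a : ℕ} {Z : Matrix (Fin m) (Fin m) ℤ_[2]} (hs : Z.IsSymm)
    (hZ : Z ∈ E m a) : ∃ T, Z = (2 : ℤ_[2]) ^ a • (T + Tᵀ) := by
  choose t ht using hZ
  refine ⟨Matrix.of fun i j => if i ≤ j then t i j else 0, ?_⟩
  ext i j
  have hij := hs.apply i j
  rcases lt_trichotomy i j with h | rfl | h
  · simp [h.le, h.not_ge, ht i j, h.ne]
  · simp [ht i i]; ring
  · rw [← hij, ht j i]
    simp [h.le, h.not_ge, h.ne]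

lemma split_mem {m : ℕ} (a : ℕ) (T : Matrix (Fin m) (Fin m) ℤ_[2]) :
    (2 : ℤ_[2]) ^ a • (T + Tᵀ) ∈ E m a := by
  intro i j
  split_ifs with h
  · subst h
    exact ⟨T i i, by simp; ring⟩
  · exact ⟨T i j + T j i, by simp⟩

lemma E_conj {m a : ℕ} {Z : Matrix (Fin m) (Fin m) ℤ_[2]} (hs : Z.IsSymm)
    (hZ : Z ∈ E m a) (U : Matrix (Fin m) (Fin m) ℤ_[2]) : Uᵀ * Z * U ∈ E m a := by
  obtain ⟨T, rfl⟩ := exists_split hs hZ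
  convert split_mem a (Uᵀ * T * U) using 1
  simp [transpose_mul, Matrix.mul_add, Matrix.add_mul, Matrix.mul_assoc]

lemma E_anti {m a b : ℕ} (h : a ≤ b) {Z : Matrix (Fin m) (Fin m) ℤ_[2]} (hZ : Z ∈ E m b) :
    Z ∈ E m a := fun i j => dvd_trans (mul_dvd_mul_right (pow_dvd_pow _ h) _) (hZ i j)

lemma smul_mem_E {m a : ℕ} (Z : Matrix (Fin m) (Fin m) ℤ_[2]) :
    (2 : ℤ_[2]) ^ (a + 1) • Z ∈ E m a := by
  intro i j
  rw [Matrix.smul_apply, smul_eq_mul, pow_succ]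
  refine Dvd.dvd.mul_right ?_ _
  split_ifs
  · exact dvd_rfl
  · exact mul_dvd_mul_left _ (one_dvd _)


/-! ### Stability of equivalence classes -/

lemma isUnit_map_iff {R : Type*} [CommRing R] [Nontrivial R] (φ : ℤ_[2] →+* R)
    (hφ : Function.Surjective φ) (x : ℤ_[2]) : IsUnit (φ x) ↔ IsUnit x := by
  have := IsLocalHom.of_surjective φ hφ
  exact _root_.isUnit_map_iff φ x

lemma isUnit_det_map_iff {m : ℕ} {R : Type*} [CommRing R] [Nontrivial R] (φ : ℤ_[2] →+* R)
    (hφ : Function.Surjective φ) (U : Matrix (Fin m) (Fin m) ℤ_[2]) :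
    IsUnit (U.map φ).det ↔ IsUnit U.det := by
  rw [← isUnit_map_iff φ hφ, RingHom.map_det]
  rfl

/-- One Newton step for the equation `Uᵀ * B * U = C`. With `C - B = 2 ^ a (T + Tᵀ)` take
`U = 1 + B⁻¹ (2 ^ a T)`; the new error is `-2 ^ (2 a) Tᵀ B⁻¹ T`, which lies in
`2 ^ (2 a - k - 1) S_e`. -/
lemma newton_step {m k a : ℕ} {B C : Matrix (Fin m) (Fin m) ℤ_[2]} (hB : B.IsSymm)
    (hC : C.IsSymm) (hk : B.det ∣ 2 ^ k) (ha : k + 2 ≤ a) (h : C - B ∈ E m a) :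
    ∃ U : Matrix (Fin m) (Fin m) ℤ_[2], IsUnit U.det ∧ C - Uᵀ * B * U ∈ E m (a + 1) := by
  obtain ⟨T, hT⟩ := exists_split (hC.sub hB) h
  obtain ⟨w, hw⟩ := hk
  obtain ⟨c, rfl⟩ := Nat.exists_eq_add_of_le ha
  set A := w • B.adjugate with hA
  have hBA : B * A = (2 : ℤ_[2]) ^ k • 1 := by
    rw [hA, Matrix.mul_smul, mul_adjugate, smul_smul, hw, mul_comm]
  have hAs : Aᵀ = A := by
    rw [hA, transpose_smul, adjugate_transpose, hB.eq]
  have hAB : A * B = (2 : ℤ_[2]) ^ k • 1 := by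
    rw [← hAs, ← hB.eq, ← transpose_mul, hBA]; simp
  set Y := (2 : ℤ_[2]) ^ (c + 2) • (A * T) with hY
  have hBY : B * Y = (2 : ℤ_[2]) ^ (k + 2 + c) • T := by
    rw [hY, Matrix.mul_smul, ← Matrix.mul_assoc, hBA, Matrix.smul_mul, Matrix.one_mul, smul_smul,
      ← pow_add]
    congr 2; ring
  have hYB : Yᵀ * B = (2 : ℤ_[2]) ^ (k + 2 + c) • Tᵀ := by
    have := congrArg transpose hBY
    rwa [transpose_mul, hB.eq, transpose_smul] at this
  refine ⟨1 + Y, ?_, ?_⟩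
  · rw [← isUnit_det_map_iff PadicInt.toZMod toZMod_surj]
    have : (1 + Y).map (PadicInt.toZMod : ℤ_[2] →+* ZMod 2) = 1 := by
      ext i j
      have : (PadicInt.toZMod : ℤ_[2] →+* ZMod 2) 2 = 0 := by
        rw [map_ofNat]; rfl
      simp [hY, this, Matrix.one_apply, apply_ite]
    simp [this]
  · have e : C - (1 + Y)ᵀ * B * (1 + Y)
        = (2 : ℤ_[2]) ^ (k + 2 + c + 1 + 1) • (-((2 : ℤ_[2]) ^ c • (Tᵀ * (A * T)))) := by
      have hC' : C = B + (2 : ℤ_[2]) ^ (k + 2 + c) • (T + Tᵀ) := by rw [← hT]; abel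
      have h2 : Yᵀ * B * Y = (2 : ℤ_[2]) ^ (k + 2 + c + 1 + 1) • ((2 : ℤ_[2]) ^ c • (Tᵀ * (A * T))) := by
        rw [hYB, hY, Matrix.mul_smul, Matrix.smul_mul, smul_smul, smul_smul, ← pow_add, ← pow_add]
        congr 2; ring
      rw [transpose_add, transpose_one, Matrix.add_mul, Matrix.add_mul, Matrix.mul_add,
        Matrix.mul_add, h2, Matrix.one_mul, Matrix.mul_one, Matrix.mul_one, hBY, hYB, hC', smul_add,
        smul_neg]
      abel
    rw [e]
    exact smul_mem_E _

lemma isClosed_cls {m : ℕ} (B : Matrix (Fin m) (Fin m) ℤ_[2]) : IsClosed (cls B) := by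
  have : CompactSpace (Matrix (Fin m) (Fin m) ℤ_[2]) :=
    inferInstanceAs (CompactSpace (Fin m → Fin m → ℤ_[2]))
  have hK : IsClosed {U : Matrix (Fin m) (Fin m) ℤ_[2] | IsUnit U.det} := by
    simp only [PadicInt.isUnit_iff]
    exact isClosed_eq (continuous_id.matrix_det.norm) continuous_const
  have h := (hK.isCompact.image (f := fun U => Uᵀ * B * U) (by fun_prop)).isClosed
  convert h using 1
  ext C
  simp [IntEquiv, eq_comm]

/-- Symmetric matrices close to a nondegenerate `B` are equivalent to `B`, with a bound depending
only on the power of `2` in `det B`. -/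
theorem stability {m k a : ℕ} {B C : Matrix (Fin m) (Fin m) ℤ_[2]} (hB : B.IsSymm)
    (hC : C.IsSymm) (hk : B.det ∣ 2 ^ k) (ha : k + 2 ≤ a) (h : C - B ∈ E m a) :
    IntEquiv 2 B C := by
  have key : ∀ b : ℕ, ∃ X ∈ cls B, C - X ∈ E m (a + b) := by
    intro b
    induction b with
    | zero => exact ⟨B, IntEquiv.refl B, h⟩
    | succ b ih =>
      obtain ⟨X, hX, hCX⟩ := ih
      obtain ⟨U, hU, hCU⟩ := newton_step (IntEquiv.isSymm hX hB) hC (IntEquiv.det_dvd hX hk)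
        (by omega) hCX
      exact ⟨_, IntEquiv.trans hX ⟨U, hU, rfl⟩, hCU⟩
  choose X hX hCX using key
  change C ∈ cls B
  refine (isClosed_cls B).mem_of_tendsto (b := atTop) (f := X) ?_ (Eventually.of_forall hX)
  refine tendsto_pi_nhds.2 fun i => tendsto_pi_nhds.2 fun j => ?_
  rw [tendsto_iff_norm_sub_tendsto_zero]
  refine squeeze_zero (fun _ => norm_nonneg _) (g := fun b : ℕ => ((2 : ℝ)⁻¹) ^ b) (fun b => ?_)
    (tendsto_pow_atTop_nhds_zero_of_lt_one (by norm_num) (by norm_num))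
  have h1 : (2 : ℤ_[2]) ^ b ∣ (C - X b) i j :=
    dvd_trans (dvd_trans (pow_dvd_pow _ (by omega)) (dvd_mul_right _ _)) (hCX b i j)
  have h2 := (PadicInt.norm_le_pow_iff_mem_span_pow ((C - X b) i j) b).2
    (Ideal.mem_span_singleton.2 (by simpa using h1))
  rw [norm_sub_rev]
  simpa using h2


/-! ### The order of `GL_m(ℤ/2^a)` -/

/-- The invertible matrices over `ℤ/2^a`. -/
abbrev GLset (m a : ℕ) : Set (Matrix (Fin m) (Fin m) (ZMod (2 ^ a))) := {X | IsUnit X.det}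

lemma nontrivial_zmod {a : ℕ} (ha : a ≠ 0) : Nontrivial (ZMod (2 ^ a)) := by
  have : Fact (1 < 2 ^ a) := ⟨Nat.one_lt_two_pow ha⟩
  infer_instance

lemma ncard_isUnit_det_zmod_two (m : ℕ) :
    {X : Matrix (Fin m) (Fin m) (ZMod 2) | IsUnit X.det}.ncard
      = ∏ i : Fin m, (2 ^ m - 2 ^ (i : ℕ)) := by
  have h := Matrix.card_GL_field (𝔽 := ZMod 2) m
  rw [ZMod.card] at h
  rw [← h]
  refine Nat.card_congr (Equiv.ofBijective
    (fun X => Matrix.nonsingInvUnit X.1 X.2) ⟨?_, ?_⟩)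
  · intro X Y h
    exact Subtype.ext (congrArg Units.val h)
  · intro g
    exact ⟨⟨g.1, (Matrix.isUnit_iff_isUnit_det _).1 g.isUnit⟩, Units.ext rfl⟩

lemma ncard_GLset (m a : ℕ) :
    (GLset m (a + 1)).ncard = (∏ i : Fin m, (2 ^ m - 2 ^ (i : ℕ))) * 2 ^ (a * (m * m)) := by
  have := nontrivial_zmod (Nat.succ_ne_zero a)
  let φ : ZMod (2 ^ (a + 1)) →+* ZMod 2 := ZMod.castHom (dvd_pow_self 2 (Nat.succ_ne_zero a)) _
  have hφ : Function.Surjective φ := ZMod.ringHom_surjective φ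
  let F : Matrix (Fin m) (Fin m) (ZMod (2 ^ (a + 1))) →+ Matrix (Fin m) (Fin m) (ZMod 2) :=
    φ.toAddMonoidHom.mapMatrix
  have hF : Function.Surjective F := by
    intro Y
    choose s hs using hφ
    refine ⟨Y.map s, ?_⟩
    ext i j
    exact hs _
  have hdet : ∀ X, IsUnit X.det ↔ IsUnit (F X).det := by
    intro X
    obtain ⟨Y, rfl⟩ : ∃ Y : Matrix (Fin m) (Fin m) ℤ_[2], Y.map (PadicInt.toZModPow (a + 1)) = X := by
      choose s hs using toZModPow_surj (a + 1)
      exact ⟨X.map s, by ext i j; exact hs _⟩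
    rw [isUnit_det_map_iff _ (toZModPow_surj _)]
    have : F (Y.map (PadicInt.toZModPow (a + 1))) = Y.map (φ.comp (PadicInt.toZModPow (a + 1))) := by
      ext i j; rfl
    rw [this, isUnit_det_map_iff _ (ZMod.ringHom_surjective _)]
  rw [← ncard_isUnit_det_zmod_two]
  refine ncard_of_fibers (Set.toFinite _) (Set.toFinite _) F _ (fun X hX => (hdet X).1 hX) ?_
  intro Y hY
  have h1 := ncard_fiber_hom F hF Y
  have h2 : {X | X ∈ GLset m (a + 1) ∧ F X = Y} = {X | F X = Y} := by
    ext X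
    simp only [Set.mem_ofPred_eq, and_iff_right_iff_imp]
    rintro rfl
    exact (hdet X).2 hY
  rw [h2]
  have c1 : Nat.card (Matrix (Fin m) (Fin m) (ZMod (2 ^ (a + 1)))) = 2 ^ ((a + 1) * (m * m)) := by
    simp [Matrix, ← pow_mul]
    ring
  have c2 : Nat.card (Matrix (Fin m) (Fin m) (ZMod 2)) = 2 ^ (m * m) := by
    simp [Matrix, ← pow_mul]
  rw [c1, c2, add_mul, one_mul, pow_add, mul_comm] at h1
  exact (Nat.eq_of_mul_eq_mul_left (by positivity) h1).symm

lemma GLset_pos (m a : ℕ) : 0 < (GLset m a).ncard :=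
  (Set.ncard_pos (Set.toFinite _)).2
    ⟨1, by change IsUnit (det 1); rw [det_one]; exact isUnit_one⟩

lemma ncard_GLset_succ_level (m a : ℕ) :
    (GLset m (a + 2)).ncard = (GLset m (a + 1)).ncard * 2 ^ (m * m) := by
  rw [ncard_GLset m (a + 1), ncard_GLset m a, mul_assoc, ← pow_add]
  congr 2; ring

lemma ncard_GLset_succ_rank (l a : ℕ) :
    (GLset (l + 1) (a + 1)).ncard
      = (GLset l (a + 1)).ncard * (2 ^ (a * (2 * l + 1)) * ((2 ^ (l + 1) - 1) * 2 ^ l)) := by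
  rw [ncard_GLset, ncard_GLset, Fin.prod_univ_succ]
  have : ∀ i : Fin l, 2 ^ (l + 1) - 2 ^ ((i.succ : Fin (l + 1)) : ℕ) = 2 * (2 ^ l - 2 ^ (i : ℕ)) := by
    intro i
    rw [Fin.val_succ, pow_succ, pow_succ, ← Nat.sub_mul, mul_comm]
  simp only [this, Finset.prod_mul_distrib, Finset.prod_const, Finset.card_univ, Fintype.card_fin]
  have e : a * ((l + 1) * (l + 1)) = a * (2 * l + 1) + a * (l * l) := by ring
  rw [e, pow_add]
  simp only [Fin.val_zero, pow_zero]
  ring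

/-! ### Orbit and stabilizer at level `a` -/

/-- The residues modulo `2 ^ a S_e` of the members of `T`. -/
abbrev im {m : ℕ} (a : ℕ) (T : Set (Matrix (Fin m) (Fin m) ℤ_[2])) : Set (Q m a) :=
  Set.image (red a) T

/-- The residue of `B[Y]` modulo `2 ^ a S_e` depends only on `Y` modulo `2 ^ a`. -/
lemma red_conj_eq {m a : ℕ} (ha : a ≠ 0) {B Y Y' : Matrix (Fin m) (Fin m) ℤ_[2]} (hB : B.IsSymm)
    (h : Y.map (PadicInt.toZModPow a) = Y'.map (PadicInt.toZModPow a)) :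
    red a (Yᵀ * B * Y) = red a (Y'ᵀ * B * Y') := by
  have h' : ∀ i j, (2 : ℤ_[2]) ^ a ∣ Y i j - Y' i j := fun i j =>
    toZModPow_eq_iff.1 (congrFun (congrFun h i) j)
  choose z hz using h'
  obtain ⟨b, rfl⟩ := Nat.exists_eq_succ_of_ne_zero ha
  have hY : Y = Y' + (2 : ℤ_[2]) ^ (b + 1) • Matrix.of z := by
    ext i j
    simp [← hz]
  set Z := Matrix.of z
  rw [red_eq]
  have e : Yᵀ * B * Y - Y'ᵀ * B * Y'
      = (2 : ℤ_[2]) ^ (b + 1) • ((Y'ᵀ * B * Z) + (Y'ᵀ * B * Z)ᵀ)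
        + (2 : ℤ_[2]) ^ (b + 1 + 1) • ((2 : ℤ_[2]) ^ b • (Zᵀ * B * Z)) := by
    rw [hY]
    simp only [transpose_mul, transpose_add, transpose_smul, hB.eq, transpose_transpose,
      Matrix.mul_add, Matrix.add_mul, Matrix.mul_smul, Matrix.smul_mul, smul_add, smul_smul,
      Matrix.mul_assoc, ← pow_add]
    rw [show b + 1 + 1 + b = b + 1 + (b + 1) by ring]
    abel
  rw [Nat.succ_eq_add_one, e]
  exact add_mem (split_mem _ _) (smul_mem_E _)

/-- A solution of `B[Y] ≡ C` with `C ∼ B`, at a level exceeding the `2`-adic order of `det B`, is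
invertible: comparing determinants, `det Y ^ 2` is a unit. -/
lemma isUnit_det_of_red {m k a : ℕ} (hka : k < a) {B C Y : Matrix (Fin m) (Fin m) ℤ_[2]}
    (hk : B.det ∣ 2 ^ k) (hC : IntEquiv 2 B C) (h : Yᵀ * B * Y - C ∈ E m a) : IsUnit Y.det := by
  obtain ⟨U, hU, rfl⟩ := hC
  obtain ⟨w, hw⟩ := hk
  have h1 : (Yᵀ * B * Y).map (PadicInt.toZModPow a) = (Uᵀ * B * U).map (PadicInt.toZModPow a) := by
    ext i j
    exact toZModPow_eq_iff.2 (dvd_trans (dvd_mul_right _ _) (h i j))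
  have h2 := congrArg Matrix.det h1
  have h3 : ∀ X : Matrix (Fin m) (Fin m) ℤ_[2],
      (X.map (PadicInt.toZModPow a)).det = PadicInt.toZModPow a X.det := fun X =>
    (RingHom.map_det _ X).symm
  rw [h3, h3, toZModPow_eq_iff] at h2
  simp only [det_mul, det_transpose] at h2
  have h4 : (2 : ℤ_[2]) ^ k * 2 ∣ 2 ^ k * (Y.det * Y.det - U.det * U.det) := by
    rw [← pow_succ]
    refine dvd_trans (pow_dvd_pow _ hka) (dvd_trans h2 ⟨w, ?_⟩)
    rw [hw]; ring
  have h5 := (mul_dvd_mul_iff_left (two_pow_ne k)).1 h4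
  by_contra hY
  rw [isUnit_iff_not_dvd, not_not] at hY
  refine isUnit_iff_not_dvd.1 (hU.mul hU) ?_
  have := dvd_sub (hY.mul_right Y.det) h5
  simpa using this

/-- Orbit–stabilizer for `GL_m(ℤ/2^a)` acting on residues of symmetric matrices. -/
theorem orbit_stabilizer {m k a : ℕ} (hka : k < a) {B : Matrix (Fin m) (Fin m) ℤ_[2]}
    (hB : B.IsSymm) (hk : B.det ∣ 2 ^ k) :
    (GLset m a).ncard = (im a (cls B)).ncard * Acount 2 B B a := by
  have ha : a ≠ 0 := by omega
  have := nontrivial_zmod ha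
  choose s hs using toZModPow_surj a
  have hs' : ∀ X : Matrix (Fin m) (Fin m) (ZMod (2 ^ a)),
      (X.map s).map (PadicInt.toZModPow a) = X := fun X => by ext i j; exact hs _
  refine ncard_of_fibers (Set.toFinite _) (Set.toFinite _)
    (fun X => red a ((X.map s)ᵀ * B * X.map s)) _ ?_ ?_
  · intro X hX
    refine ⟨_, ⟨X.map s, ?_, rfl⟩, rfl⟩
    rw [← isUnit_det_map_iff _ (toZModPow_surj a), hs']
    exact hX
  · rintro _ ⟨_, ⟨U, hU, rfl⟩, rfl⟩
    change _ = Set.ncard {X | _}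
    have hUV := mul_nonsing_inv U hU
    have hVU := nonsing_inv_mul U hU
    have hV := isUnit_nonsing_inv_det U hU
    set V := U⁻¹
    have mm : ∀ Y W : Matrix (Fin m) (Fin m) ℤ_[2], (Y * W).map (PadicInt.toZModPow a) =
      Y.map (PadicInt.toZModPow a) * W.map (PadicInt.toZModPow a) := fun Y W => Matrix.map_mul
    have hUV' : U.map (PadicInt.toZModPow a) * V.map (PadicInt.toZModPow a) = 1 := by
      rw [← mm, hUV]; simp
    have hVU' : V.map (PadicInt.toZModPow a) * U.map (PadicInt.toZModPow a) = 1 := by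
      rw [← mm, hVU]; simp
    refine Set.ncard_congr (fun X _ => X * V.map (PadicInt.toZModPow a)) ?_ ?_ ?_
    · rintro X ⟨hX, hXU⟩
      refine ⟨X.map s * V, by rw [mm, hs'], densCond_iff.2 ?_⟩
      have hsym : ((X.map s)ᵀ * B * X.map s - Uᵀ * B * U).IsSymm :=
        IsSymm.sub (by simp [IsSymm, transpose_mul, hB.eq, Matrix.mul_assoc])
          (by simp [IsSymm, transpose_mul, hB.eq, Matrix.mul_assoc])
      have := E_conj hsym (red_eq.1 hXU) V
      rw [Matrix.mul_sub, Matrix.sub_mul, conj_cancel hUV] at this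
      convert this using 2
      simp [transpose_mul, Matrix.mul_assoc]
    · intro X X' _ _ h
      have := congrArg (· * U.map (PadicInt.toZModPow a)) h
      simpa [Matrix.mul_assoc, hVU'] using this
    · rintro X ⟨Y, rfl, hY⟩
      rw [densCond_iff] at hY
      have hYu := isUnit_det_of_red hka hk (IntEquiv.refl B) hY
      refine ⟨(Y * U).map (PadicInt.toZModPow a), ⟨?_, ?_⟩, ?_⟩
      · refine (isUnit_det_map_iff _ (toZModPow_surj a) _).2 ?_
        rw [det_mul]
        exact hYu.mul hU
      · have h1 : red a ((((Y * U).map (PadicInt.toZModPow a)).map s)ᵀ * B *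
            ((Y * U).map (PadicInt.toZModPow a)).map s) = red a ((Y * U)ᵀ * B * (Y * U)) :=
          red_conj_eq ha hB (hs' _)
        refine h1.trans (red_eq.2 ?_)
        have hsym : (Yᵀ * B * Y - B).IsSymm :=
          IsSymm.sub (by simp [IsSymm, transpose_mul, hB.eq, Matrix.mul_assoc]) hB
        have := E_conj hsym hY U
        rw [Matrix.mul_sub, Matrix.sub_mul] at this
        convert this using 2
        simp [transpose_mul, Matrix.mul_assoc]
      · rw [mm, Matrix.mul_assoc, hUV', Matrix.mul_one]


/-! ### Local densities as orbit sizes -/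

/-- The even symmetric matrix with upper triangle `t` (the diagonal being doubled). -/
def evenMat {m : ℕ} (t : Sym2 (Fin m) → ℤ_[2]) : Matrix (Fin m) (Fin m) ℤ_[2] :=
  Matrix.of fun i j => (if i = j then 2 else 1) * t s(i, j)

lemma evenMat_isSymm {m : ℕ} (t : Sym2 (Fin m) → ℤ_[2]) : (evenMat t).IsSymm := by
  ext i j
  simp [evenMat, Sym2.eq_swap, eq_comm]

lemma exists_evenMat {m a : ℕ} {Z : Matrix (Fin m) (Fin m) ℤ_[2]} (hs : Z.IsSymm)
    (hZ : Z ∈ E m a) : ∃ t, Z = (2 : ℤ_[2]) ^ a • evenMat t := by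
  choose t ht using hZ
  have hne : ∀ i j : Fin m, (2 : ℤ_[2]) ^ a * (if i = j then 2 else 1) ≠ 0 := by
    intro i j
    refine mul_ne_zero (two_pow_ne a) ?_
    split_ifs
    · exact two_ne_zero
    · exact one_ne_zero
  refine ⟨Sym2.lift ⟨t, fun i j => ?_⟩, ?_⟩
  · have h := hs.apply i j
    rw [ht, ht] at h
    have e : (if j = i then (2 : ℤ_[2]) else 1) = if i = j then 2 else 1 := by simp [eq_comm]
    rw [e] at h
    exact (mul_left_cancel₀ (hne i j) h).symm
  · ext i j
    simp [evenMat, ht i j, mul_assoc]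

lemma evenMat_mem {m : ℕ} (a : ℕ) (t : Sym2 (Fin m) → ℤ_[2]) :
    (2 : ℤ_[2]) ^ a • evenMat t ∈ E m a := fun i j =>
  ⟨t s(i, j), by simp [evenMat, mul_assoc]⟩

/-- A class is a union of cosets of `2 ^ a S_e`, each of which splits into `2 ^ (m (m + 1) / 2)`
cosets of `2 ^ (a + 1) S_e`. -/
lemma ncard_im_succ {m k a : ℕ} {B : Matrix (Fin m) (Fin m) ℤ_[2]} (hB : B.IsSymm)
    (hk : B.det ∣ 2 ^ k) (ha : k + 2 ≤ a) :
    (im (a + 1) (cls B)).ncard = (im a (cls B)).ncard * 2 ^ ((m + 1).choose 2) := by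
  let f : Q m (a + 1) →+ Q m a := QuotientAddGroup.map (E m (a + 1)) (E m a)
    (AddMonoidHom.id _) (fun Z hZ => E_anti (Nat.le_succ a) hZ)
  have hf : ∀ C, f (red (a + 1) C) = red a C := fun C => rfl
  refine ncard_of_fibers (Set.toFinite _) (Set.toFinite _) f _ ?_ ?_
  · rintro _ ⟨C, hC, rfl⟩
    exact ⟨C, hC, rfl⟩
  · rintro _ ⟨C, hC, rfl⟩
    have hCs := IntEquiv.isSymm hC hB
    have e : {x | x ∈ im (a + 1) (cls B) ∧ f x = red a C}
        = (fun t => red (a + 1) (C + (2 : ℤ_[2]) ^ a • evenMat t)) '' Set.univ := by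
      ext x
      constructor
      · rintro ⟨⟨D, hD, rfl⟩, hx⟩
        rw [hf, red_eq] at hx
        obtain ⟨t, ht⟩ := exists_evenMat ((IntEquiv.isSymm hD hB).sub hCs) hx
        refine ⟨t, trivial, ?_⟩
        simp only [← ht, add_sub_cancel]
      · rintro ⟨t, -, rfl⟩
        have hmem : C + (2 : ℤ_[2]) ^ a • evenMat t - C ∈ E m a := by
          rw [add_sub_cancel_left]; exact evenMat_mem a t
        refine ⟨⟨_, IntEquiv.trans hC (stability hCs ?_ (IntEquiv.det_dvd hC hk) ha hmem), rfl⟩, ?_⟩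
        · exact hCs.add ((evenMat_isSymm t).smul _)
        · rw [hf, red_eq]; exact hmem
    rw [e, ncard_image_eq Set.univ _ (fun t z => (PadicInt.toZMod (t z) : ZMod 2))]
    · have : (fun (t : Sym2 (Fin m) → ℤ_[2]) z => (PadicInt.toZMod (t z) : ZMod 2)) '' Set.univ
          = Set.univ := by
        rw [Set.image_univ, Set.range_eq_univ]
        exact toZMod_surj.comp_left
      rw [this, Set.ncard_univ, Nat.card_fun]
      simp [Sym2.card]
    · intro t _ t' _
      rw [red_eq, add_sub_add_left_eq_sub, ← smul_sub, mem_E, funext_iff]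
      have hne : ∀ i j : Fin m, (2 : ℤ_[2]) ^ a * (if i = j then 2 else 1) ≠ 0 := by
        intro i j
        refine mul_ne_zero (two_pow_ne a) ?_
        split_ifs
        · exact two_ne_zero
        · exact one_ne_zero
      rw [Sym2.forall]
      refine forall₂_congr fun i j => ?_
      have e1 : (2 : ℤ_[2]) ^ (a + 1) * (if i = j then 2 else 1)
        = 2 ^ a * (if i = j then 2 else 1) * 2 := by ring
      have e2 : ((2 : ℤ_[2]) ^ a • (evenMat t - evenMat t')) i j
        = 2 ^ a * (if i = j then 2 else 1) * (t s(i, j) - t' s(i, j)) := by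
        simp only [Matrix.smul_apply, Matrix.sub_apply, evenMat, of_apply, smul_eq_mul]; ring
      rw [toZMod_eq_iff, e1, e2, mul_dvd_mul_iff_left (hne i j)]

lemma im_cls_pos {m : ℕ} (a : ℕ) (B : Matrix (Fin m) (Fin m) ℤ_[2]) :
    0 < (im a (cls B)).ncard :=
  (Set.ncard_pos (Set.toFinite _)).2 ⟨_, B, IntEquiv.refl B, rfl⟩

lemma Acount_succ {m k a : ℕ} {B : Matrix (Fin m) (Fin m) ℤ_[2]} (hB : B.IsSymm)
    (hk : B.det ∣ 2 ^ k) (ha : k + 2 ≤ a) :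
    Acount 2 B B (a + 1) * 2 ^ ((m + 1).choose 2) = Acount 2 B B a * 2 ^ (m * m) := by
  have h1 := orbit_stabilizer (a := a) (by omega) hB hk
  have h2 := orbit_stabilizer (a := a + 1) (by omega) hB hk
  obtain ⟨b, rfl⟩ : ∃ b, a = b + 1 := ⟨a - 1, by omega⟩
  rw [ncard_GLset_succ_level, h1, ncard_im_succ hB hk ha] at h2
  refine Nat.eq_of_mul_eq_mul_left (im_cls_pos (b + 1) B) ?_
  linear_combination -h2

/-- The sequence defining the local density is constant from the level `k + 2` on. -/
theorem locDens_eq {m k a : ℕ} {B : Matrix (Fin m) (Fin m) ℤ_[2]} (hB : B.IsSymm)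
    (hk : B.det ∣ 2 ^ k) (ha : k + 2 ≤ a) :
    locDens 2 B = 2⁻¹ * (2 ^ (a * (m + 1).choose 2) / 2 ^ (a * (m * m))) * Acount 2 B B a := by
  let s : ℕ → ℝ := fun b =>
    2⁻¹ * (2 ^ (b * (m + 1).choose 2) / 2 ^ (b * (m * m))) * Acount 2 B B b
  have hs : ∀ b, a ≤ b → s b = s a := by
    intro b hb
    induction b, hb using Nat.le_induction with
    | base => rfl
    | succ b hb ih =>
      rw [← ih]
      have h := congrArg (Nat.cast (R := ℝ)) (Acount_succ hB hk (ha.trans hb))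
      push_cast at h
      simp only [s, add_mul, one_mul, pow_add]
      field_simp
      linear_combination h
  have hexp : ((m : ℤ) * (m + 1)) / 2 = ((m + 1).choose 2 : ℕ) := by
    rw [Nat.choose_two_right, Nat.add_sub_cancel]
    push_cast
    rw [mul_comm]
  refine Tendsto.limUnder_eq (Tendsto.congr' (f₁ := fun _ => s a) ?_ tendsto_const_nhds)
  filter_upwards [eventually_ge_atTop a] with b hb
  rw [← hs b hb]
  simp only [s, Fintype.card_fin, if_true, hexp]
  rw [mul_add, zpow_add₀ (by norm_num), mul_neg]
  have e1 : (2 : ℝ) ^ ((b : ℤ) * ((m : ℤ) * m)) = 2 ^ (b * (m * m)) := by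
    rw [← zpow_natCast]; push_cast; rfl
  have e2 : (2 : ℝ) ^ ((b : ℤ) * ((m + 1).choose 2 : ℕ)) = 2 ^ (b * (m + 1).choose 2) := by
    rw [← zpow_natCast]; push_cast; rfl
  rw [Nat.cast_ofNat, _root_.zpow_neg _ ((b : ℤ) * ((m : ℤ) * m)), e1, e2, div_eq_inv_mul, _root_.zpow_neg_one]

/-- The inverse local density is, up to a factor depending only on `m` and `a`, the number of
residues of the class of `B`. -/
theorem inv_locDens_eq {m k a : ℕ} {B : Matrix (Fin m) (Fin m) ℤ_[2]} (hB : B.IsSymm)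
    (hk : B.det ∣ 2 ^ k) (ha : k + 2 ≤ a) :
    (locDens 2 B)⁻¹ = 2 * 2 ^ (a * (m * m)) / 2 ^ (a * (m + 1).choose 2) / (GLset m a).ncard
      * (im a (cls B)).ncard := by
  rw [locDens_eq hB hk ha]
  have h1 := orbit_stabilizer (a := a) (by omega) hB hk
  have h2 := GLset_pos m a
  have h3 := im_cls_pos a B
  have h4 : Acount 2 B B a ≠ 0 := by
    intro h
    rw [h, mul_zero] at h1
    omega
  rw [h1]
  push_cast
  have h3' : ((im a (cls B)).ncard : ℝ) ≠ 0 := by exact_mod_cast h3.ne'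
  have h4' : (Acount 2 B B a : ℝ) ≠ 0 := by exact_mod_cast h4
  field_simp

/-! ### Counting classes through residues -/

/-- If `a` is large enough to separate the classes in `T`, there are finitely many of them and
their residues partition those of `T`. -/
theorem classes_sum {m a : ℕ} {T : Set (Matrix (Fin m) (Fin m) ℤ_[2])}
    (hT : ∀ C ∈ T, cls C ⊆ T)
    (hst : ∀ C ∈ T, ∀ D ∈ T, red a C = red a D → IntEquiv 2 C D) :
    (classesOf 2 T).Finite ∧
      ∑ᶠ c ∈ classesOf 2 T, ((im a c).ncard : ℝ) = (im a T).ncard := by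
  let κ : Q m a → Set (Matrix (Fin m) (Fin m) ℤ_[2]) :=
    fun x => {A | ∃ C ∈ T, red a C = x ∧ IntEquiv 2 C A}
  have hκ : ∀ C ∈ T, κ (red a C) = cls C := by
    intro C hC
    ext A
    constructor
    · rintro ⟨D, hD, h, hA⟩
      exact IntEquiv.trans (hst C hC D hD h.symm) hA
    · exact fun h => ⟨C, hC, rfl, h⟩
  have himage : classesOf 2 T = κ '' im a T := by
    rw [classesOf, im, Set.image_image]
    exact Set.image_congr fun C hC => (hκ C hC).symm
  have hfin : (classesOf 2 T).Finite := by
    rw [himage]; exact Set.toFinite _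
  refine ⟨hfin, ?_⟩
  rw [finsum_mem_eq_finite_toFinset_sum _ hfin]
  have hT' := Set.toFinite (im a T)
  rw [Set.ncard_eq_toFinset_card _ hT', Finset.card_eq_sum_card_fiberwise (f := κ)
    (t := hfin.toFinset)]
  · push_cast
    refine Finset.sum_congr rfl fun c hc => ?_
    rw [Set.Finite.mem_toFinset] at hc
    obtain ⟨C, hC, rfl⟩ := hc
    rw [← Set.ncard_coe_finset]
    congr 2
    ext x
    simp only [Finset.coe_filter, Set.Finite.mem_toFinset, Set.mem_ofPred_eq]
    constructor
    · rintro ⟨D, hD, rfl⟩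
      exact ⟨⟨D, hT C hC hD, rfl⟩, (hκ D (hT C hC hD)).trans (cls_eq hD).symm⟩
    · rintro ⟨⟨D, hD, rfl⟩, h⟩
      rw [hκ D hD] at h
      exact ⟨D, h ▸ IntEquiv.refl D, rfl⟩
  · intro x hx
    simp only [Set.Finite.coe_toFinset] at hx ⊢
    rw [himage]
    exact ⟨x, hx, rfl⟩


/-! ### Averaging over the diagonal modulo 2 -/

/-- The diagonal modulo `2`. For symmetric `C` it is the linear form `v ↦ C[v] mod 2`. -/
def diagMod {m : ℕ} (C : Matrix (Fin m) (Fin m) ℤ_[2]) : Fin m → ZMod 2 :=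
  fun i => PadicInt.toZMod (C i i)

lemma diagMod_conj {m : ℕ} {C : Matrix (Fin m) (Fin m) ℤ_[2]} (hC : C.IsSymm)
    (U : Matrix (Fin m) (Fin m) ℤ_[2]) :
    diagMod (Uᵀ * C * U) = (U.map PadicInt.toZMod)ᵀ *ᵥ diagMod C := by
  ext i
  -- The off-diagonal terms cancel in pairs in characteristic two; they are collected in `W + Wᵀ`.
  obtain ⟨T, hT⟩ := exists_split (m := m) (a := 0) (Z := C - diagonal fun i => C i i)
    (hC.sub (isSymm_diagonal _)) (by
      intro i j
      by_cases h : i = j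
      · subst h; simp
      · simp [h])
  have hC' : C = diagonal (fun i => C i i) + (T + Tᵀ) := by
    rw [pow_zero, one_smul] at hT
    rw [← hT]; abel
  have h2 : (2 : ZMod 2) = 0 := rfl
  have e : (Uᵀ * C * U) i i = ∑ j, U j i * C j j * U j i + 2 * (Uᵀ * T * U) i i := by
    have : Uᵀ * C * U = Uᵀ * diagonal (fun i => C i i) * U + (Uᵀ * T * U + (Uᵀ * T * U)ᵀ) := by
      conv_lhs => rw [hC']
      simp [transpose_mul, Matrix.mul_add, Matrix.add_mul, Matrix.mul_assoc]
    rw [this, Matrix.add_apply, Matrix.add_apply, transpose_apply, Matrix.mul_apply, ← two_mul]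
    simp [Matrix.mul_diagonal]
  have hsq : ∀ x : ZMod 2, x * x = x := by decide
  simp only [diagMod, e, map_add, map_sum, map_mul, map_ofNat, h2, zero_mul, add_zero, mulVec,
    dotProduct, transpose_apply, map_apply]
  refine Finset.sum_congr rfl fun j _ => ?_
  rw [mul_right_comm, hsq]

lemma diagMod_eq_of_red {m a : ℕ} {C D : Matrix (Fin m) (Fin m) ℤ_[2]} (h : red a C = red a D) :
    diagMod C = diagMod D := by
  ext i
  rw [diagMod, diagMod, toZMod_eq_iff]
  have := red_eq.1 h i i
  rw [if_pos rfl] at this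
  exact dvd_trans (dvd_mul_left _ _) this

/-- `diagMod` on residues, through an arbitrary representative. -/
def diagQ {m a : ℕ} (x : Q m a) : Fin m → ZMod 2 := diagMod (Quotient.out x)

lemma diagQ_red {m a : ℕ} (C : Matrix (Fin m) (Fin m) ℤ_[2]) : diagQ (red a C) = diagMod C :=
  diagMod_eq_of_red (a := a) (Quotient.out_eq' _)

/-- Every nonzero vector modulo `2` is the `i`-th row of a matrix in `GL_m(ℤ_2)`. -/
lemma exists_row {m : ℕ} (i : Fin m) {d : Fin m → ZMod 2} (hd : d ≠ 0) :
    ∃ U : Matrix (Fin m) (Fin m) ℤ_[2], IsUnit U.det ∧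
      (U.map PadicInt.toZMod)ᵀ *ᵥ Pi.single i 1 = d := by
  obtain ⟨j, hj⟩ := Function.ne_iff.1 hd
  choose s hs using toZMod_surj
  have h1 : ∀ x : ZMod 2, x ≠ 0 → x = 1 := by decide
  -- the identity with `j`-th row replaced by `d`, then rows `i` and `j` swapped
  let W : Matrix (Fin m) (Fin m) ℤ_[2] := (1 : Matrix (Fin m) (Fin m) ℤ_[2]).updateRow j (s ∘ d)
  have hW : W.det = s (d j) := by
    rw [← cramer_transpose_apply, transpose_one, cramer_one]
    rfl
  refine ⟨W.submatrix (Equiv.swap i j) id, ?_, ?_⟩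
  · rw [det_permute, hW]
    refine ((Units.isUnit _).map (Int.castRingHom ℤ_[2])).mul ?_
    rw [← isUnit_map_iff PadicInt.toZMod toZMod_surj, hs, h1 _ hj]
    exact isUnit_one
  · ext l
    simp [W, hs]

/-- Among the residues of an odd, `GL_m`-stable set of symmetric matrices, the proportion with
odd `i`-th diagonal entry is `2 ^ (m - 1) / (2 ^ m - 1)`. -/
theorem ncard_odd_entry {l a : ℕ} {T : Set (Matrix (Fin (l + 1)) (Fin (l + 1)) ℤ_[2])}
    (hT : ∀ C ∈ T, cls C ⊆ T) (hs : ∀ C ∈ T, C.IsSymm) (ho : ∀ C ∈ T, diagMod C ≠ 0)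
    (i : Fin (l + 1)) :
    (2 ^ (l + 1) - 1) * (im a {C ∈ T | IsUnit (C i i)}).ncard = 2 ^ l * (im a T).ncard := by
  set N := {x | x ∈ im a T ∧ diagQ x = Pi.single i 1}.ncard with hN
  have hfib : ∀ d : Fin (l + 1) → ZMod 2, d ≠ 0 → {x | x ∈ im a T ∧ diagQ x = d}.ncard = N := by
    intro d hd
    obtain ⟨U, hU, hUd⟩ := exists_row i hd
    have hUV := mul_nonsing_inv U hU
    have hVU := nonsing_inv_mul U hU
    have hV := isUnit_nonsing_inv_det U hU
    set V := U⁻¹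
    have e2 : {x | x ∈ im a T ∧ diagQ x = d} =
        (fun C => red a (Uᵀ * C * U)) '' {C ∈ T | diagMod C = Pi.single i 1} := by
      ext x
      constructor
      · rintro ⟨⟨C, hC, rfl⟩, h⟩
        rw [diagQ_red] at h
        refine ⟨Vᵀ * C * V, ⟨hT C hC ⟨V, hV, rfl⟩, ?_⟩, ?_⟩
        · rw [diagMod_conj (hs C hC), h, ← hUd, mulVec_mulVec, ← transpose_mul, ← Matrix.map_mul, hUV,
            Matrix.map_one _ (map_zero _) (map_one _), transpose_one, one_mulVec]
        · simp only [conj_cancel hVU]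
      · rintro ⟨C, ⟨hC, h⟩, rfl⟩
        refine ⟨⟨_, hT C hC ⟨U, hU, rfl⟩, rfl⟩, ?_⟩
        rw [diagQ_red, diagMod_conj (hs C hC), h, hUd]
    have e3 : {x | x ∈ im a T ∧ diagQ x = Pi.single i 1}
        = red a '' {C ∈ T | diagMod C = Pi.single i 1} := by
      ext x
      constructor
      · rintro ⟨⟨C, hC, rfl⟩, h⟩
        exact ⟨C, ⟨hC, by rwa [diagQ_red] at h⟩, rfl⟩
      · rintro ⟨C, ⟨hC, h⟩, rfl⟩
        exact ⟨⟨C, hC, rfl⟩, by rwa [diagQ_red]⟩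
    rw [hN, e2, e3]
    refine ncard_image_eq _ _ _ fun C hC D hD => ?_
    rw [red_eq, red_eq]
    have hsym := (hs C hC.1).sub (hs D hD.1)
    have e4 : Uᵀ * C * U - Uᵀ * D * U = Uᵀ * (C - D) * U := by
      rw [Matrix.mul_sub, Matrix.sub_mul]
    rw [e4]
    refine ⟨fun h => ?_, fun h => E_conj hsym h U⟩
    have := E_conj (by simp [IsSymm, transpose_mul, hsym.eq, Matrix.mul_assoc]) h V
    rwa [conj_cancel hUV] at this
  have h1 : (im a T).ncard = {d : Fin (l + 1) → ZMod 2 | d ≠ 0}.ncard * N := by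
    refine ncard_of_fibers (Set.toFinite _) (Set.toFinite _) diagQ N ?_ hfib
    rintro _ ⟨C, hC, rfl⟩
    rw [diagQ_red]
    exact ho C hC
  have hunit : ∀ x : ℤ_[2], IsUnit x ↔ (PadicInt.toZMod x : ZMod 2) = 1 := by
    intro x
    rw [← isUnit_map_iff PadicInt.toZMod toZMod_surj]
    generalize (PadicInt.toZMod x : ZMod 2) = y
    revert y; decide
  have h2 : (im a {C ∈ T | IsUnit (C i i)}).ncard
      = {d : Fin (l + 1) → ZMod 2 | d i = 1}.ncard * N := by
    refine ncard_of_fibers (Set.toFinite _) (Set.toFinite _) diagQ N ?_ ?_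
    · rintro _ ⟨C, hC, rfl⟩
      rw [diagQ_red]
      exact (hunit _).1 hC.2
    · intro d hd
      rw [← hfib d (by rintro rfl; exact zero_ne_one hd)]
      congr 1
      ext x
      constructor
      · rintro ⟨⟨C, hC, rfl⟩, h⟩
        exact ⟨⟨C, hC.1, rfl⟩, h⟩
      · rintro ⟨⟨C, hC, rfl⟩, h⟩
        refine ⟨⟨C, ⟨hC, (hunit _).2 ?_⟩, rfl⟩, h⟩
        rw [diagQ_red] at h
        have := congrFun h i
        exact this.trans hd
  have c1 : {d : Fin (l + 1) → ZMod 2 | d ≠ 0}.ncard = 2 ^ (l + 1) - 1 := by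
    have : {d : Fin (l + 1) → ZMod 2 | d ≠ 0} = {0}ᶜ := rfl
    rw [this, Set.ncard_compl, Set.ncard_singleton]
    simp
  have c2 : {d : Fin (l + 1) → ZMod 2 | d i = 1}.ncard = 2 ^ l := by
    have := ncard_fiber_hom (Pi.evalAddMonoidHom (fun _ : Fin (l + 1) => ZMod 2) i)
      (Function.surjective_eval i) 1
    rw [Nat.card_fun, Nat.card_zmod, Nat.card_fin, pow_succ'] at this
    exact (Nat.eq_of_mul_eq_mul_left (by norm_num) this).symm
  rw [h1, h2, c1, c2]
  ring


/-! ### Splitting off an odd diagonal entry -/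

section split

variable {l : ℕ}

/-- The matrix `u • Uᵀ (1 ⊥ D) U` with `U` the unipotent matrix of first row `(1, r)`. Every
symmetric matrix whose first diagonal entry is a unit has this form, in exactly one way. -/
def Phi (u : ℤ_[2]) (r : Fin l → ℤ_[2]) (D : Matrix (Fin l) (Fin l) ℤ_[2]) :
    Matrix (Fin (l + 1)) (Fin (l + 1)) ℤ_[2] :=
  Matrix.of fun i j =>
    Fin.cases (Fin.cases u (fun j => u * r j) j)
      (fun i => Fin.cases (u * r i) (fun j => u * (D i j + r i * r j)) j) i

@[simp] lemma Phi_zero_zero (u r) (D : Matrix (Fin l) (Fin l) ℤ_[2]) : Phi u r D 0 0 = u := rfl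

@[simp] lemma Phi_zero_succ (u r) (D : Matrix (Fin l) (Fin l) ℤ_[2]) (j : Fin l) :
    Phi u r D 0 j.succ = u * r j := rfl

@[simp] lemma Phi_succ_zero (u r) (D : Matrix (Fin l) (Fin l) ℤ_[2]) (i : Fin l) :
    Phi u r D i.succ 0 = u * r i := rfl

@[simp] lemma Phi_succ_succ (u r) (D : Matrix (Fin l) (Fin l) ℤ_[2]) (i j : Fin l) :
    Phi u r D i.succ j.succ = u * (D i j + r i * r j) := rfl

/-- The orthogonal sum `(1) ⊥ D`, indexed by `Fin (l + 1)`. -/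
def pad (D : Matrix (Fin l) (Fin l) ℤ_[2]) : Matrix (Fin (l + 1)) (Fin (l + 1)) ℤ_[2] :=
  Phi 1 0 D

/-- The standard identification of the index set of `(1) ⊥ D` with `Fin (l + 1)`. -/
def e0 (l : ℕ) : Fin 1 ⊕ Fin l ≃ Fin (l + 1) := finSumFinEquiv.trans (finCongr (add_comm 1 l))

lemma e0_inl (i : Fin 1) : e0 l (Sum.inl i) = 0 := by
  ext; simp [e0]

lemma e0_inr (i : Fin l) : e0 l (Sum.inr i) = i.succ := by
  ext; simp [e0]

lemma pad_submatrix (D : Matrix (Fin l) (Fin l) ℤ_[2]) :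
    (pad D).submatrix (e0 l) (e0 l) = fromBlocks 1 0 0 D := by
  ext (i | i) (j | j) <;> simp [e0_inl, e0_inr, pad, Matrix.one_apply, eq_iff_true_of_subsingleton]

lemma det_pad (D : Matrix (Fin l) (Fin l) ℤ_[2]) : (pad D).det = D.det := by
  rw [← det_submatrix_equiv_self (e0 l), pad_submatrix, det_fromBlocks_zero₂₁]
  simp

lemma pad_conj (U D : Matrix (Fin l) (Fin l) ℤ_[2]) :
    (pad U)ᵀ * pad D * pad U = pad (Uᵀ * D * U) := by
  ext i j
  refine Fin.cases ?_ (fun i => ?_) i <;> refine Fin.cases ?_ (fun j => ?_) j <;>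
    simp [pad, Matrix.mul_apply, Fin.sum_univ_succ]

lemma IntEquiv.pad {D D' : Matrix (Fin l) (Fin l) ℤ_[2]} (h : IntEquiv 2 D D') :
    IntEquiv 2 (pad D) (pad D') := by
  obtain ⟨U, hU, rfl⟩ := h
  exact ⟨KM.pad U, by rwa [det_pad], (pad_conj U D).symm⟩

/-- The unipotent matrix with first row `(1, r)`. -/
def unip (r : Fin l → ℤ_[2]) : Matrix (Fin (l + 1)) (Fin (l + 1)) ℤ_[2] :=
  Matrix.of fun i j => Fin.cases (Fin.cases 1 r j) (fun i => if i.succ = j then 1 else 0) i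

lemma det_unip (r : Fin l → ℤ_[2]) : (unip r).det = 1 := by
  rw [det_of_isUpperTriangular]
  · refine Finset.prod_eq_one fun i _ => ?_
    refine Fin.cases ?_ (fun i => ?_) i <;> simp [unip]
  · intro i j h
    induction i using Fin.cases with
    | zero => exact absurd h (by simp)
    | succ i =>
      have : i.succ ≠ j := fun h' => by simp [h'] at h
      simp [unip, this]

lemma Phi_eq (u : ℤ_[2]) (r : Fin l → ℤ_[2]) (D : Matrix (Fin l) (Fin l) ℤ_[2]) :
    Phi u r D = u • ((unip r)ᵀ * pad D * unip r) := by
  ext i j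
  refine Fin.cases ?_ (fun i => ?_) i <;> refine Fin.cases ?_ (fun j => ?_) j <;>
    simp [pad, unip, Matrix.mul_apply, Fin.sum_univ_succ, add_comm]

lemma intEquiv_Phi (u : ℤ_[2]) (r : Fin l → ℤ_[2]) (D : Matrix (Fin l) (Fin l) ℤ_[2]) :
    IntEquiv 2 (u • pad D) (Phi u r D) :=
  ⟨unip r, by simp [det_unip], by simp [Phi_eq]⟩

lemma exists_Phi {C : Matrix (Fin (l + 1)) (Fin (l + 1)) ℤ_[2]} (hC : C.IsSymm)
    (hu : IsUnit (C 0 0)) : ∃ u r D, IsUnit u ∧ Phi u r D = C := by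
  obtain ⟨w, hw⟩ := hu.exists_right_inv
  refine ⟨C 0 0, fun j => w * C 0 j.succ, Matrix.of fun i j =>
    w * C i.succ j.succ - w * C 0 i.succ * (w * C 0 j.succ), hu, ?_⟩
  ext i j
  refine Fin.cases ?_ (fun i => ?_) i <;> refine Fin.cases ?_ (fun j => ?_) j
  · simp
  · simp [← mul_assoc, hw]
  · simp [← mul_assoc, hw, hC.apply 0 i.succ]
  · simp [← mul_assoc, hw]

/-- The reindexing in `IntEquivR` is immaterial: it is absorbed in the change of basis. -/
lemma intEquivR_iff {ξ : ℤ_[2]} {D : Matrix (Fin l) (Fin l) ℤ_[2]}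
    {B : Matrix (Fin (l + 1)) (Fin (l + 1)) ℤ_[2]} :
    IntEquivR 2 (ξ • fromBlocks (1 : Matrix (Fin 1) (Fin 1) ℤ_[2]) 0 0 D) B ↔
      IntEquiv 2 (ξ • pad D) B := by
  have hsm : ξ • (pad D).submatrix (e0 l) (e0 l) = (ξ • pad D).submatrix (e0 l) (e0 l) := rfl
  rw [← pad_submatrix, hsm]
  generalize ξ • pad D = P
  constructor
  · rintro ⟨e, U, hU, h⟩
    refine ⟨U.submatrix (e0 l).symm e.symm, ?_, ?_⟩
    · refine isUnit_det_of_right_inverse (B := U⁻¹.submatrix e.symm (e0 l).symm) ?_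
      rw [submatrix_mul_equiv, mul_nonsing_inv U hU, submatrix_one_equiv]
    · have hP : P = (P.submatrix (e0 l) (e0 l)).submatrix (e0 l).symm (e0 l).symm := by simp
      have hB : B = (B.submatrix e e).submatrix e.symm e.symm := by simp
      rw [hP, transpose_submatrix, submatrix_mul_equiv, submatrix_mul_equiv, ← h, ← hB]
  · rintro ⟨U, hU, rfl⟩
    refine ⟨e0 l, U.submatrix (e0 l) (e0 l), by rwa [det_submatrix_equiv_self], ?_⟩
    rw [transpose_submatrix, submatrix_mul_equiv, submatrix_mul_equiv]

lemma dvd_of_unit_diff {n : ℕ} {u u' x y : ℤ_[2]} (hu : IsUnit u) (h : (2 : ℤ_[2]) ^ n ∣ u - u') :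
    (2 : ℤ_[2]) ^ n ∣ u * x - u' * y ↔ (2 : ℤ_[2]) ^ n ∣ x - y := by
  have : u * x - u' * y = u * (x - y) + (u - u') * y := by ring
  rw [this, dvd_add_left (h.mul_right _), hu.dvd_mul_left]

lemma sq_dvd {a : ℕ} (ha : 1 ≤ a) {x y : ℤ_[2]} (h : (2 : ℤ_[2]) ^ a ∣ x - y) :
    (2 : ℤ_[2]) ^ (a + 1) ∣ x * x - y * y := by
  obtain ⟨t, ht⟩ := h
  obtain ⟨b, rfl⟩ : ∃ b, a = b + 1 := ⟨a - 1, by omega⟩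
  obtain rfl : x = y + 2 ^ (b + 1) * t := by rw [← ht]; ring
  exact ⟨t * y + 2 ^ b * t * t, by ring⟩

/-- Residues of `Phi u r D` correspond to residues of `u` modulo `2 ^ (a + 1)`, of `r` modulo
`2 ^ a` and of `D` modulo `2 ^ a S_e`. -/
lemma red_Phi {a : ℕ} (ha : 1 ≤ a) {u u' : ℤ_[2]} {r r' : Fin l → ℤ_[2]}
    {D D' : Matrix (Fin l) (Fin l) ℤ_[2]} (hu : IsUnit u) :
    red a (Phi u r D) = red a (Phi u' r' D') ↔
      (PadicInt.toZModPow (a + 1) u = PadicInt.toZModPow (a + 1) u' ∧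
        ∀ i, PadicInt.toZModPow a (r i) = PadicInt.toZModPow a (r' i)) ∧
        red a D = red a D' := by
  simp only [red_eq, mem_E, toZModPow_eq_iff, Fin.forall_fin_succ, Matrix.sub_apply,
    Phi_zero_zero, Phi_zero_succ, Phi_succ_zero, Phi_succ_succ, Fin.succ_inj,
    Fin.succ_ne_zero, (Fin.succ_ne_zero _).symm, if_true, if_false, mul_one, ← pow_succ]
  have key : (2 : ℤ_[2]) ^ (a + 1) ∣ u - u' → (∀ i, (2 : ℤ_[2]) ^ a ∣ r i - r' i) → ∀ i j,
      (2 ^ a * (if i = j then 2 else 1) ∣ u * (D i j + r i * r j) - u' * (D' i j + r' i * r' j) ↔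
        2 ^ a * (if i = j then 2 else 1) ∣ D i j - D' i j) := by
    intro h0 h1 i j
    have h0' : (2 : ℤ_[2]) ^ a ∣ u - u' := (pow_dvd_pow _ (Nat.le_succ a)).trans h0
    have e : D i j + r i * r j - (D' i j + r' i * r' j)
      = D i j - D' i j + (r i * r j - r' i * r' j) := by ring
    split_ifs with h
    · subst h
      rw [← pow_succ, dvd_of_unit_diff hu h0, e, dvd_add_left (sq_dvd ha (h1 i))]
    · rw [mul_one, dvd_of_unit_diff hu h0', e, dvd_add_left]
      have e' : r i * r j - r' i * r' j = r i * (r j - r' j) + (r i - r' i) * r' j := by ring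
      rw [e']
      exact dvd_add ((h1 j).mul_left _) ((h1 i).mul_right _)
  constructor
  · rintro ⟨⟨h0, h1⟩, h2⟩
    have h0' : (2 : ℤ_[2]) ^ a ∣ u - u' := (pow_dvd_pow _ (Nat.le_succ a)).trans h0
    have h1' : ∀ i, (2 : ℤ_[2]) ^ a ∣ r i - r' i := fun i => (dvd_of_unit_diff hu h0').1 (h1 i)
    exact ⟨⟨h0, h1'⟩, fun i j => (key h0 h1' i j).1 ((h2 i).2 j)⟩
  · rintro ⟨⟨h0, h1⟩, h2⟩
    have h0' : (2 : ℤ_[2]) ^ a ∣ u - u' := (pow_dvd_pow _ (Nat.le_succ a)).trans h0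
    have h1' : ∀ i, (2 : ℤ_[2]) ^ a ∣ u * r i - u' * r' i :=
      fun i => (dvd_of_unit_diff hu h0').2 (h1 i)
    exact ⟨⟨h0, h1'⟩, fun i => ⟨h1' i, fun j => (key h0 h1 i j).2 (h2 i j)⟩⟩

lemma ncard_units (a : ℕ) : {y : ZMod (2 ^ (a + 1)) | IsUnit y}.ncard = 2 ^ a := by
  have : {y : ZMod (2 ^ (a + 1)) | IsUnit y} = Set.range (Units.val) := rfl
  rw [this, ← Set.image_univ, Set.ncard_image_of_injective _ Units.val_injective, Set.ncard_univ,
    Nat.card_eq_fintype_card, ZMod.card_units_eq_totient, Nat.totient_prime_pow Nat.prime_two]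
  · simp
  · omega

/-- Counting residues with unit first entry through the parametrization `Phi`. -/
theorem ncard_unit_corner {a : ℕ} (ha : 1 ≤ a)
    {T : Set (Matrix (Fin (l + 1)) (Fin (l + 1)) ℤ_[2])} {S : Set (Matrix (Fin l) (Fin l) ℤ_[2])}
    (hs : ∀ C ∈ T, C.IsSymm) (hTS : ∀ u r D, IsUnit u → (Phi u r D ∈ T ↔ D ∈ S)) :
    (im a {C ∈ T | IsUnit (C 0 0)}).ncard = 2 ^ (a * (l + 1)) * (im a S).ncard := by
  let f : (ℤ_[2] × (Fin l → ℤ_[2])) × Matrix (Fin l) (Fin l) ℤ_[2] → Q (l + 1) a :=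
    fun x => red a (Phi x.1.1 x.1.2 x.2)
  let g : (ℤ_[2] × (Fin l → ℤ_[2])) × Matrix (Fin l) (Fin l) ℤ_[2] →
      (ZMod (2 ^ (a + 1)) × (Fin l → ZMod (2 ^ a))) × Q l a :=
    fun x => ((PadicInt.toZModPow (a + 1) x.1.1, fun i => PadicInt.toZModPow a (x.1.2 i)),
      red a x.2)
  let A : Set ((ℤ_[2] × (Fin l → ℤ_[2])) × Matrix (Fin l) (Fin l) ℤ_[2]) :=
    ({u | IsUnit u} ×ˢ Set.univ) ×ˢ S
  have hf : im a {C ∈ T | IsUnit (C 0 0)} = f '' A := by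
    ext x
    constructor
    · rintro ⟨C, ⟨hC, hu⟩, rfl⟩
      obtain ⟨u, r, D, hu', rfl⟩ := exists_Phi (hs C hC) hu
      exact ⟨((u, r), D), ⟨⟨hu', trivial⟩, (hTS u r D hu').1 hC⟩, rfl⟩
    · rintro ⟨⟨⟨u, r⟩, D⟩, ⟨⟨hu, -⟩, hD⟩, rfl⟩
      exact ⟨_, ⟨(hTS u r D hu).2 hD, hu⟩, rfl⟩
  have hg : g '' A = ({y | IsUnit y} ×ˢ Set.univ) ×ˢ im a S := by
    have : Fact (1 < 2 ^ (a + 1)) := ⟨Nat.one_lt_two_pow (by omega)⟩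
    ext x
    constructor
    · rintro ⟨⟨⟨u, r⟩, D⟩, ⟨⟨hu, -⟩, hD⟩, rfl⟩
      exact ⟨⟨IsUnit.map (PadicInt.toZModPow (a + 1)) hu, trivial⟩, D, hD, rfl⟩
    · obtain ⟨⟨y, s⟩, z⟩ := x
      rintro ⟨⟨hy, -⟩, D, hD, rfl⟩
      obtain ⟨u, rfl⟩ := toZModPow_surj (a + 1) y
      choose t ht using toZModPow_surj a
      refine ⟨((u, t ∘ s), D), ⟨⟨?_, trivial⟩, hD⟩, ?_⟩
      · exact (isUnit_map_iff _ (toZModPow_surj (a + 1)) u).1 hy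
      · simp [g, ht]
  rw [hf, ncard_image_eq A f g, hg, Set.ncard_prod, Set.ncard_prod, ncard_units, Set.ncard_univ,
    Nat.card_fun, Nat.card_zmod, Nat.card_fin]
  · ring
  · rintro ⟨⟨u, r⟩, D⟩ ⟨⟨hu, -⟩, -⟩ ⟨⟨u', r'⟩, D'⟩ -
    simp only [f, g, red_Phi ha hu, Prod.mk.injEq, funext_iff]

end split


/-! ### The mass identity -/

section main

variable {l : ℕ} {B : Matrix (Fin (l + 1)) (Fin (l + 1)) ℤ_[2]}

/-- The set of matrices equivalent to `B` up to a unit factor. -/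
def St {m : ℕ} (B : Matrix (Fin m) (Fin m) ℤ_[2]) : Set (Matrix (Fin m) (Fin m) ℤ_[2]) :=
  {C | ∃ ξ : ℤ_[2], IsUnit ξ ∧ IntEquiv 2 (ξ • C) B}

/-- The set of `D` for which `(1) ⊥ D` is equivalent to `B` up to a unit factor. -/
def Sp (B : Matrix (Fin (l + 1)) (Fin (l + 1)) ℤ_[2]) : Set (Matrix (Fin l) (Fin l) ℤ_[2]) :=
  {D | pad D ∈ St B}

lemma St_cls {C C' : Matrix (Fin (l + 1)) (Fin (l + 1)) ℤ_[2]} (hC : C ∈ St B)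
    (h : IntEquiv 2 C C') : C' ∈ St B := by
  obtain ⟨ξ, hξ, h'⟩ := hC
  exact ⟨ξ, hξ, (h.symm.smul ξ).trans h'⟩

lemma smul_mem_St {u : ℤ_[2]} (hu : IsUnit u) {C : Matrix (Fin (l + 1)) (Fin (l + 1)) ℤ_[2]} :
    u • C ∈ St B ↔ C ∈ St B := by
  constructor
  · rintro ⟨ξ, hξ, h⟩
    exact ⟨ξ * u, hξ.mul hu, by rwa [mul_smul]⟩
  · rintro ⟨ξ, hξ, h⟩
    obtain ⟨w, hw⟩ := hu.exists_left_inv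
    refine ⟨ξ * w, hξ.mul (IsUnit.of_mul_eq_one u hw), ?_⟩
    rwa [smul_smul, mul_assoc, hw, mul_one]

lemma Phi_mem_St {u : ℤ_[2]} (hu : IsUnit u) (r : Fin l → ℤ_[2]) (D) :
    Phi u r D ∈ St B ↔ D ∈ Sp B := by
  have h := intEquiv_Phi u r D
  rw [Sp, Set.mem_ofPred_eq, ← smul_mem_St hu (C := pad D)]
  exact ⟨fun h' => St_cls h' h.symm, fun h' => St_cls h' h⟩

lemma Sp_cls {D D' : Matrix (Fin l) (Fin l) ℤ_[2]} (hD : D ∈ Sp B)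
    (h : IntEquiv 2 D D') : D' ∈ Sp B :=
  St_cls (B := B) hD h.pad

lemma isSymm_of_smul {m : ℕ} {ξ : ℤ_[2]} (hξ : IsUnit ξ) {C : Matrix (Fin m) (Fin m) ℤ_[2]}
    (h : (ξ • C).IsSymm) : C.IsSymm := by
  ext i j
  have := h.apply j i
  simpa [hξ.ne_zero] using this.symm

lemma St_isSymm (hB : B.IsSymm) {C} (hC : C ∈ St B) : C.IsSymm := by
  obtain ⟨ξ, hξ, h⟩ := hC
  exact isSymm_of_smul hξ (h.symm.isSymm hB)

lemma St_det (x : ℤ_[2]) (hB : B.det ∣ x) {C} (hC : C ∈ St B) : C.det ∣ x := by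
  obtain ⟨ξ, hξ, h⟩ := hC
  have := h.symm.det_dvd hB
  rw [det_smul] at this
  exact dvd_of_mul_left_dvd this

lemma Sp_isSymm (hB : B.IsSymm) {D} (hD : D ∈ Sp B) : D.IsSymm := by
  have := St_isSymm hB (C := pad D) hD
  ext i j
  simpa [pad] using this.apply i.succ j.succ

lemma Sp_det (x : ℤ_[2]) (hB : B.det ∣ x) {D} (hD : D ∈ Sp B) : D.det ∣ x := by
  rw [← det_pad]
  exact St_det x hB hD

lemma St_odd (hB : B.IsSymm) (ho : ¬ ∀ i, ∃ x : ℤ_[2], B i i = 2 * x) {C} (hC : C ∈ St B) :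
    diagMod C ≠ 0 := by
  intro h0
  have hCs := St_isSymm hB hC
  obtain ⟨ξ, hξ, U, hU, h⟩ := hC
  have h1 : diagMod (ξ • C) = 0 := by
    ext i
    have := congrFun h0 i
    simp only [diagMod, Pi.zero_apply] at this
    simp [diagMod, this]
  have h2 : diagMod B = 0 := by
    rw [h, diagMod_conj (hCs.smul ξ), h1, mulVec_zero]
  refine ho fun i => ?_
  have := congrFun h2 i
  rw [diagMod, Pi.zero_apply, ← map_zero PadicInt.toZMod, toZMod_eq_iff, sub_zero] at this
  exact this

/-- Scaling by a unit does not change the number of residues in a class. -/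
lemma ncard_im_cls {a : ℕ} {C} (hC : C ∈ St B) :
    (im a (cls C)).ncard = (im a (cls B)).ncard := by
  obtain ⟨ξ, hξ, h⟩ := hC
  obtain ⟨w, hw⟩ := hξ.exists_left_inv
  have e : im a (cls B) = (fun X => red a (ξ • X)) '' cls C := by
    rw [← cls_eq h]
    ext x
    constructor
    · rintro ⟨X, hX, rfl⟩
      refine ⟨w • X, ?_, ?_⟩
      · have := IntEquiv.smul hX w
        rwa [smul_smul, hw, one_smul] at this
      · simp only [smul_smul, mul_comm ξ w, hw, one_smul]
    · rintro ⟨X, hX, rfl⟩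
      exact ⟨_, IntEquiv.smul hX ξ, rfl⟩
  rw [e]
  refine ncard_image_eq _ _ _ fun X _ Y _ => ?_
  rw [red_eq, red_eq, ← smul_sub]
  refine forall₂_congr fun i j => ?_
  rw [Matrix.smul_apply, smul_eq_mul, hξ.dvd_mul_left]

/-- The mass identity for `B` of size `l + 1`; the parity of `l` plays no role. It follows by
writing both sides through numbers of residues at a level `a` that separates all classes involved
and counting in two ways the residues of `St B` with odd first diagonal entry. -/
theorem mass (hB : B.IsSymm) (hd : B.det ≠ 0) (ho : ¬ ∀ i, ∃ x : ℤ_[2], B i i = 2 * x) :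
    (classesOf 2 (St B)).Finite ∧ (classesOf 2 (Sp B)).Finite ∧
      ∀ g : Set (Matrix (Fin l) (Fin l) ℤ_[2]) → ℝ,
        (∀ D ∈ Sp B, g (cls D) = (locDens 2 D)⁻¹) →
        ∑ᶠ c ∈ classesOf 2 (Sp B), g c =
          ((classesOf 2 (St B)).ncard : ℝ) / (2 * locDens 2 B) := by
  obtain ⟨k, hk⟩ : ∃ k, B.det ∣ 2 ^ k := by
    refine ⟨B.det.valuation, ?_⟩
    have := PadicInt.unitCoeff_spec hd
    conv_lhs => rw [this]
    rw [(Units.isUnit _).mul_left_dvd]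
    norm_num
  set a := k + 2 with ha
  obtain ⟨f1, s1⟩ := classes_sum (a := a) (T := St B) (fun C hC C' h => St_cls hC h)
    (fun C hC D hD h => (stability (St_isSymm hB hD) (St_isSymm hB hC) (St_det _ hk hD) le_rfl
      (red_eq.1 h)).symm)
  obtain ⟨f2, s2⟩ := classes_sum (a := a) (T := Sp B) (fun C hC C' h => Sp_cls hC h)
    (fun C hC D hD h => (stability (Sp_isSymm hB hD) (Sp_isSymm hB hC) (Sp_det _ hk hD) le_rfl
      (red_eq.1 h)).symm)
  refine ⟨f1, f2, fun g hg => ?_⟩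
  -- All classes in `St B` have the same number of residues.
  have hSt : ((im a (St B)).ncard : ℝ) = (classesOf 2 (St B)).ncard * (im a (cls B)).ncard := by
    rw [← s1, finsum_mem_congr rfl (g := fun _ => ((im a (cls B)).ncard : ℝ)),
      finsum_mem_eq_finite_toFinset_sum _ f1, Finset.sum_const, nsmul_eq_mul,
      Set.ncard_eq_toFinset_card _ f1]
    rintro _ ⟨C, hC, rfl⟩
    exact_mod_cast ncard_im_cls hC
  have hSp : ∑ᶠ c ∈ classesOf 2 (Sp B), g c =
      2 * 2 ^ (a * (l * l)) / 2 ^ (a * (l + 1).choose 2) / (GLset l a).ncard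
        * (im a (Sp B)).ncard := by
    rw [← s2, mul_finsum_mem]
    refine finsum_mem_congr rfl ?_
    rintro _ ⟨D, hD, rfl⟩
    exact (hg D hD).trans (inv_locDens_eq (Sp_isSymm hB hD) (Sp_det _ hk hD) le_rfl)
  -- The double count: `(2 ^ (l + 1) - 1) * 2 ^ (a (l + 1)) * #S' = 2 ^ l * #S̃` on residues.
  have h1 := ncard_odd_entry (a := a) (T := St B) (fun C hC C' h => St_cls hC h)
    (fun C hC => St_isSymm hB hC) (fun C hC => St_odd hB ho hC) 0
  rw [ncard_unit_corner (S := Sp B) (by omega) (fun C hC => St_isSymm hB hC)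
    (fun u r D hu => Phi_mem_St hu r D)] at h1
  have h2 : (GLset (l + 1) a).ncard
      = (GLset l a).ncard * (2 ^ ((k + 1) * (2 * l + 1)) * ((2 ^ (l + 1) - 1) * 2 ^ l)) :=
    ncard_GLset_succ_rank l (k + 1)
  have h3 := GLset_pos l a
  have hc : (l + 1 + 1).choose 2 = (l + 1) + (l + 1).choose 2 := by
    rw [Nat.choose_succ_succ' (l + 1) 1, Nat.choose_one_right]
  rw [hSp, div_mul_eq_div_div, div_eq_mul_inv _ (locDens 2 B),
    inv_locDens_eq hB hk (le_refl (k + 2)), ← ha, h2, hc]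
  have hq : 0 < 2 ^ (l + 1) - 1 := Nat.sub_pos_of_lt (Nat.one_lt_two_pow (by omega))
  generalize 2 ^ (l + 1) - 1 = q at *
  have h1' : (q : ℝ) * (2 ^ (a * (l + 1)) * (im a (Sp B)).ncard)
      = 2 ^ l * ((classesOf 2 (St B)).ncard * (im a (cls B)).ncard) := by
    rw [← hSt]; exact_mod_cast h1
  have h3' : ((GLset l a).ncard : ℝ) ≠ 0 := by positivity
  have hq' : (q : ℝ) ≠ 0 := by positivity
  have e : (2 : ℝ) ^ (a * ((l + 1) * (l + 1)))
      = 2 * 2 ^ (a * (l * l)) * 2 ^ ((k + 1) * (2 * l + 1)) * 2 ^ l * 2 ^ l := by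
    rw [ha]; ring
  push_cast
  rw [e, mul_add a, pow_add (2 : ℝ)]
  generalize ((im a (Sp B)).ncard : ℝ) = x at *
  generalize ((im a (cls B)).ncard : ℝ) = y at *
  generalize ((classesOf 2 (St B)).ncard : ℝ) = h at *
  generalize ((GLset l a).ncard : ℝ) = G at *
  field_simp
  linear_combination h1'

end main

end KM

/-- for `B ∈ S_m(ℤ_2)_o^×` with `m` even,
`∑_{B' ∈ S'(B)/∼} 1/α_2(B') = #(S̃(B)/∼) / (2α_2(B))`. -/
theorem statement17 (m : ℕ) (hme : Even m) (hm0 : 0 < m)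
    (B : Matrix (Fin m) (Fin m) ℤ_[2]) (hBs : B.IsSymm) (hBd : B.det ≠ 0)
    (hBo : ¬ ∀ i, ∃ x : ℤ_[2], B i i = 2 * x) :
    let Stilde : Set (Matrix (Fin m) (Fin m) ℤ_[2]) :=
      {B'' | ∃ ξ : ℤ_[2], IsUnit ξ ∧ KM.IntEquiv 2 (ξ • B'') B}
    let Sprime : Set (Matrix (Fin (m - 1)) (Fin (m - 1)) ℤ_[2]) :=
      {B' | ∃ ξ : ℤ_[2], IsUnit ξ ∧
        KM.IntEquivR 2
          (ξ • Matrix.fromBlocks (1 : Matrix (Fin 1) (Fin 1) ℤ_[2]) 0 0 B') B}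
    (KM.classesOf 2 Stilde).Finite ∧ (KM.classesOf 2 Sprime).Finite ∧
      ∀ g : Set (Matrix (Fin (m - 1)) (Fin (m - 1)) ℤ_[2]) → ℝ,
        (∀ B' ∈ Sprime, g {B'' | KM.IntEquiv 2 B' B''} = (KM.locDens 2 B')⁻¹) →
        (∑ᶠ c ∈ KM.classesOf 2 Sprime, g c) =
          ((KM.classesOf 2 Stilde).ncard : ℝ) / (2 * KM.locDens 2 B) := by
  intro Stilde Sprime
  obtain ⟨l, rfl⟩ : ∃ l, m = l + 1 := ⟨m - 1, by omega⟩
  have hS : Sprime = KM.Sp B := by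
    ext D
    exact exists_congr fun ξ => and_congr_right fun _ => KM.intEquivR_iff
  rw [hS]
  exact KM.mass hBs hBd hBo
end
end

section
/- For any units a₁, a₂ ∈ ℤ_2^*, the diagonal matrices diag(5a₁, 4a₂) and diag(a₁, 4·5a₂) = diag(a₁, 20a₂) are equivalent over ℤ_2, i.e. there exists U ∈ GL_2(ℤ_2) with Uᵀ·diag(5a₁, 4a₂)·U = diag(a₁, 20a₂). -/
/-! With `v = a₂ / a₁`, it suffices to solve `5 x² + 4 v = 1` in `ℤ_2`: then
`U = !![x, -4 v; 1, 5 x]` has determinant `5 x² + 4 v = 1` and carries `diag(5a₁, 4a₂)` to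
`diag(a₁, 20a₂)`. Since `v` is odd, `(1 - 4 v) / 5 ≡ 1 mod 8` is a square; the root is produced in
`exists_five_mul_sq_add` by Hensel's lemma. -/

open Matrix Filter

open scoped Classical

noncomputable section

/-- A unit of `ℤ_2` is odd, so adding `1` makes it even. -/
lemma norm_one_add_unit_lt (v : ℤ_[2]) (hv : IsUnit v) : ‖1 + v‖ < 1 := by
  rw [← PadicInt.mem_nonunits, ← IsLocalRing.mem_maximalIdeal, ← PadicInt.ker_toZMod,
    RingHom.mem_ker, map_add, map_one]
  have h : ∀ z : ZMod 2, IsUnit z → 1 + z = 0 := by decide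
  exact h _ (hv.map _)

/-- Substituting `x = 1 + 2 w` turns `5 x² + 4 v = 1` into `5 w² + 5 w + (1 + v) = 0`, for which
`w = 0` is a simple root modulo `2`, so that Hensel's lemma applies. -/
lemma exists_five_mul_sq_add (v : ℤ_[2]) (hv : IsUnit v) :
    ∃ x : ℤ_[2], 5 * x ^ 2 + 4 * v = 1 := by
  let F : Polynomial ℤ_[2] :=
    Polynomial.C 5 * Polynomial.X ^ 2 + Polynomial.C 5 * Polynomial.X + Polynomial.C (1 + v)
  have h5 : ‖(5 : ℤ_[2])‖ = 1 := by
    rw [← PadicInt.isUnit_iff]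
    by_contra h
    have h' : (5 : ℤ_[2]) ∈ nonunits ℤ_[2] := h
    rw [← IsLocalRing.mem_maximalIdeal, ← PadicInt.ker_toZMod, RingHom.mem_ker, map_ofNat] at h'
    exact absurd h' (by decide)
  have hF : ‖F.aeval (0 : ℤ_[2])‖ < ‖F.derivative.aeval (0 : ℤ_[2])‖ ^ 2 := by
    simpa [F, h5] using norm_one_add_unit_lt v hv
  obtain ⟨w, hw, -⟩ := hensels_lemma hF
  have hw' : 5 * w ^ 2 + 5 * w + (1 + v) = 0 := by simpa [F] using hw
  exact ⟨1 + 2 * w, by linear_combination 4 * hw'⟩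

/-- `diag(5a₁, 4a₂) ∼ diag(a₁, 20a₂)` over `ℤ_2`. -/
theorem statement18 (a₁ a₂ : ℤ_[2]) (h₁ : IsUnit a₁) (h₂ : IsUnit a₂) :
    ∃ U : Matrix (Fin 2) (Fin 2) ℤ_[2], IsUnit U.det ∧
      Uᵀ * Matrix.diagonal ![5 * a₁, 4 * a₂] * U = Matrix.diagonal ![a₁, 20 * a₂] := by
  obtain ⟨u, rfl⟩ := h₁
  -- `v` is the ratio `a₂ / a₁`.
  obtain ⟨v, rfl⟩ : ∃ v, a₂ = u * v := ⟨↑u⁻¹ * a₂, by simp⟩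
  obtain ⟨x, hx⟩ := exists_five_mul_sq_add v (isUnit_of_mul_isUnit_right h₂)
  refine ⟨!![x, -4 * v; 1, 5 * x], ?_, ?_⟩
  · have h : (!![x, -4 * v; 1, 5 * x] : Matrix (Fin 2) (Fin 2) ℤ_[2]).det = 1 := by
      rw [Matrix.det_fin_two_of]
      linear_combination hx
    exact IsUnit.of_mul_eq_one 1 (by rw [h, mul_one])
  · ext i j
    fin_cases i <;> fin_cases j <;>
      simp [Matrix.mul_apply, Fin.sum_univ_two, Matrix.diagonal]
    · linear_combination (u : ℤ_[2]) * hx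
    · ring
    · ring
    · linear_combination 20 * (u : ℤ_[2]) * v * hx
end
end
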